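/- arXiv:1902.03719 — 3 statements merged into one kernel-verified Lean document; each statement's English description precedes it below -/
import Mathlib

section
/- Let f be a homogeneous polynomial of degree d ≥ 2 in n ≥ 2 variables and let w ∈ ℝⁿ be a point with f(w) > 0. Then the following are equivalent: (1) the Hessian of f^{1/d} at w is negative semidefinite; (2) the Hessian of log f at w is negative semidefinite; (3) the Hessian of f at w has exactly one positive eigenvalue. -/
open MvPolynomial Matrix

noncomputable def polyHessian {n : ℕ} (f : MvPolynomial (Fin n) ℝ) (w : Fin n → ℝ) :
    Matrix (Fin n) (Fin n) ℝ :=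
  Matrix.of fun i j => eval w (pderiv i (pderiv j f))

def ExactlyOnePosEig {n : ℕ} (A : Matrix (Fin n) (Fin n) ℝ) : Prop :=
  ∃ hA : A.IsHermitian, (Finset.univ.filter fun i => 0 < hA.eigenvalues i).card = 1

def AtMostOnePosEig {n : ℕ} (A : Matrix (Fin n) (Fin n) ℝ) : Prop :=
  ∃ hA : A.IsHermitian, (Finset.univ.filter fun i => 0 < hA.eigenvalues i).card ≤ 1

def MConvexSet {n : ℕ} (J : Set (Fin n →₀ ℕ)) : Prop :=
  ∀ α ∈ J, ∀ β ∈ J, ∀ i : Fin n, β i < α i →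
    ∃ j : Fin n, α j < β j ∧ α - Finsupp.single i 1 + Finsupp.single j 1 ∈ J

def LorBase {n : ℕ} (d : ℕ) (f : MvPolynomial (Fin n) ℝ) : Prop :=
  f.IsHomogeneous d ∧ (∀ α, 0 ≤ f.coeff α) ∧ MConvexSet {α | f.coeff α ≠ 0}

def IsLorentzian {n : ℕ} : ℕ → MvPolynomial (Fin n) ℝ → Prop
  | 0, f => LorBase 0 f
  | 1, f => LorBase 1 f
  | 2, f => LorBase 2 f ∧ AtMostOnePosEig (polyHessian f 0)
  | d + 3, f => LorBase (d + 3) f ∧ ∀ i, IsLorentzian (d + 2) (pderiv i f)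

noncomputable def funHessian {n : ℕ} (g : (Fin n → ℝ) → ℝ) (w : Fin n → ℝ) :
    Matrix (Fin n) (Fin n) ℝ :=
  Matrix.of fun i j => iteratedFDeriv ℝ 2 g w ![Pi.single i 1, Pi.single j 1]

/-!
Euler's identity says that the Hessian `H` of `f` at `w` satisfies `H w = (d - 1) ∇f(w)`, so for a
scalar function `φ` the Hessian of `φ ∘ f` at `w` is `φ'(f w) H` plus a multiple of
`(H w) (H w)ᵀ`, while `wᵀ H w = d (d - 1) f(w) > 0`. Since `H` is positive in the direction `w`, it
has exactly one positive eigenvalue iff it is nonpositive on the `H`-orthogonal complement of `w`,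
and then the reverse Cauchy–Schwarz inequality `(wᵀ H w) (xᵀ H x) ≤ (wᵀ H x) ^ 2` holds for all `x`.
The rank-one term vanishes on that complement, so a negative semidefinite Hessian of `φ ∘ f` forces
`H` to be nonpositive there when `φ' > 0`. Conversely, the inequality bounds the `H` term by a
rank-one term, and their sum is nonpositive as soon as `φ ∘ f` has nonpositive second derivative at
`w` along the ray through `w`; that derivative is negative for `φ = log` and zero for
`φ = (· ^ (1 / d))`.
-/

section Signature

open LinearMap (BilinForm)
open QuadraticForm

theorem apply_sum_smul_self_of_isOrthoᵢ {R M ι : Type*} [CommSemiring R] [AddCommMonoid M]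
    [Module R M] [Fintype ι] {B : BilinForm R M} {b : ι → M} (hb : B.IsOrthoᵢ b) (c : ι → R) :
    B (∑ i, c i • b i) (∑ i, c i • b i) = ∑ i, B (b i) (b i) * (c i * c i) := by
  simp only [map_sum, LinearMap.sum_apply, map_smul, LinearMap.smul_apply, smul_eq_mul]
  refine Finset.sum_congr rfl fun i _ => ?_
  rw [Finset.sum_eq_single i (fun j _ hj => by rw [hb hj]; ring) (by simp)]
  ring

variable {𝕜 M ι : Type*} [Field 𝕜] [LinearOrder 𝕜] [IsStrictOrderedRing 𝕜] [AddCommGroup M]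
  [Module 𝕜 M] {B : BilinForm 𝕜 M}

theorem sigPos_eq_ncard_of_isOrthoᵢ [Finite ι] {b : Module.Basis ι 𝕜 M} (hb : B.IsOrthoᵢ b) :
    sigPos B.toQuadraticMap = {i | 0 < B (b i) (b i)}.ncard := by
  have := Fintype.ofFinite ι
  have hrepr : B.toQuadraticMap.basisRepr b =
      QuadraticMap.weightedSumSquares 𝕜 fun i => B (b i) (b i) := by
    ext c
    simp only [QuadraticMap.basisRepr_apply, LinearMap.BilinMap.toQuadraticMap_apply,
      apply_sum_smul_self_of_isOrthoᵢ hb, QuadraticMap.weightedSumSquares_apply, smul_eq_mul]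
  exact sigPos_of_equiv_weightedSumSquares (hrepr ▸ ⟨B.toQuadraticMap.isometryEquivBasisRepr b⟩)

variable [FiniteDimensional 𝕜 M]

theorem card_le_sigPos_of_isOrthoᵢ [Fintype ι] {b : ι → M} (hb : B.IsOrthoᵢ b)
    (hpos : ∀ i, 0 < B (b i) (b i)) : Fintype.card ι ≤ sigPos B.toQuadraticMap := by
  rw [← finrank_span_eq_card (LinearMap.linearIndependent_of_isOrthoᵢ hb fun i => (hpos i).ne')]
  refine le_sigPos_of_posDef _ ?_
  rintro ⟨x, hx⟩ hx0
  obtain ⟨c, rfl⟩ := (Submodule.mem_span_range_iff_exists_fun 𝕜).mp hx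
  obtain ⟨i, hi⟩ : ∃ i, c i ≠ 0 := by
    by_contra! h
    simp [h] at hx0
  rw [QuadraticMap.restrict_apply, LinearMap.BilinMap.toQuadraticMap_apply,
    apply_sum_smul_self_of_isOrthoᵢ hb]
  exact Finset.sum_pos' (fun j _ => mul_nonneg (hpos j).le (mul_self_nonneg _))
    ⟨i, Finset.mem_univ i, mul_pos (hpos i) (mul_self_pos.mpr hi)⟩

theorem sigPos_eq_one_iff_nonpos_on_orthogonal (hB : B.IsSymm) {w : M} (hw : 0 < B w w) :
    sigPos B.toQuadraticMap = 1 ↔ ∀ x, B w x = 0 → B x x ≤ 0 := by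
  constructor
  · intro h x hx
    by_contra! hxx
    have htwo : Fintype.card (Fin 2) ≤ sigPos B.toQuadraticMap :=
      card_le_sigPos_of_isOrthoᵢ (b := ![w, x])
        (LinearMap.isOrthoᵢ_def.mpr (by simp [Fin.forall_fin_two, hx, hB.eq x w]))
        (by simp [Fin.forall_fin_two, hw, hxx])
    simp [h] at htwo
  · intro h
    have hle : sigPos B.toQuadraticMap + Module.finrank 𝕜 (LinearMap.ker (B w)) ≤
        Module.finrank 𝕜 M :=
      sigPos_add_finrank_le_of_nonpos h
    have hker : Module.finrank 𝕜 (LinearMap.ker (B w)) + 1 = Module.finrank 𝕜 M :=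
      Module.Dual.finrank_ker_add_one_of_ne_zero fun h0 => hw.ne' (by simp [h0])
    have hone : Fintype.card Unit ≤ sigPos B.toQuadraticMap :=
      card_le_sigPos_of_isOrthoᵢ (b := fun _ => w)
        (fun _ _ hij => absurd (Subsingleton.elim _ _) hij) fun _ => hw
    rw [Fintype.card_unit] at hone
    omega

end Signature

section ReverseCauchySchwarz

variable {R M : Type*} [CommRing R] [LinearOrder R] [IsStrictOrderedRing R] [AddCommGroup M]
  [Module R M] {B : LinearMap.BilinForm R M}

theorem mul_apply_self_le_sq_of_nonpos_on_orthogonal (hB : B.IsSymm) {w : M} (hw : 0 < B w w)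
    (h : ∀ x, B w x = 0 → B x x ≤ 0) (x : M) : B w w * B x x ≤ B w x ^ 2 := by
  have hproj : B (B w w • x - B w x • w) (B w w • x - B w x • w) ≤ 0 := h _ (by
    simp only [map_sub, map_smul, smul_eq_mul]
    ring)
  have hexpand : B (B w w • x - B w x • w) (B w w • x - B w x • w) =
      B w w * (B w w * B x x - B w x ^ 2) := by
    simp only [map_sub, map_smul, LinearMap.sub_apply, LinearMap.smul_apply, smul_eq_mul,
      hB.eq x w]
    ring
  exact sub_nonpos.mp (nonpos_of_mul_nonpos_right (hexpand ▸ hproj) hw)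

end ReverseCauchySchwarz

section RealMatrix

variable {ι : Type*} [Fintype ι] [DecidableEq ι] {A : Matrix ι ι ℝ}

theorem sigPos_toQuadraticForm' (hA : A.IsHermitian) :
    sigPos A.toQuadraticForm' = {i | 0 < hA.eigenvalues i}.ncard := by
  let b : Module.Basis ι ℝ (ι → ℝ) :=
    hA.eigenvectorBasis.toBasis.map (WithLp.linearEquiv 2 ℝ (ι → ℝ))
  have hdot (i j : ι) : b i ⬝ᵥ b j = if j = i then 1 else 0 := by
    simpa [b, EuclideanSpace.inner_eq_star_dotProduct] using
      orthonormal_iff_ite.mp hA.eigenvectorBasis.orthonormal j i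
  have heigen (j : ι) : A *ᵥ b j = hA.eigenvalues j • b j := by
    simpa [b] using hA.mulVec_eigenvectorBasis j
  have happly (i j : ι) : toLinearMap₂' ℝ A (b i) (b j) =
      if j = i then hA.eigenvalues j else 0 := by
    simp [toLinearMap₂'_apply', heigen, hdot]
  have hortho : (toLinearMap₂' ℝ A).IsOrthoᵢ b :=
    LinearMap.isOrthoᵢ_def.mpr fun i j hij => by rw [happly, if_neg hij.symm]
  rw [toQuadraticForm', sigPos_eq_ncard_of_isOrthoᵢ hortho]
  simp only [happly, if_true]

theorem posSemidef_neg_smul_add_vecMulVec_iff (hA : A.IsHermitian) {w : ι → ℝ}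
    (hw : 0 < w ⬝ᵥ A *ᵥ w) {a c : ℝ} (ha : 0 < a) (hac : a + c * (w ⬝ᵥ A *ᵥ w) ≤ 0) :
    (-(a • A + c • vecMulVec (A *ᵥ w) (A *ᵥ w))).PosSemidef ↔ sigPos A.toQuadraticForm' = 1 := by
  have hB : (toBilin' A).IsSymm :=
    isSymm_toBilin'_iff_isSymm.mpr (isHermitian_iff_isSymm.mp hA)
  have hquad (x : ι → ℝ) : x ⬝ᵥ (-(a • A + c • vecMulVec (A *ᵥ w) (A *ᵥ w))) *ᵥ x =
      -(a * toBilin' A x x + c * toBilin' A w x ^ 2) := by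
    simp only [neg_mulVec, add_mulVec, smul_mulVec, vecMulVec_mulVec, dotProduct_neg,
      dotProduct_add, dotProduct_smul, smul_eq_mul, op_smul_eq_smul, ← hB.eq x w,
      toBilin'_apply', dotProduct_comm (A *ᵥ w) x]
    ring
  have hherm : (-(a • A + c • vecMulVec (A *ᵥ w) (A *ᵥ w))).IsHermitian := by
    simp_all [IsSymm, transpose_vecMulVec]
  rw [← toBilin'_apply'] at hw hac
  rw [show A.toQuadraticForm' = (toBilin' A).toQuadraticMap from rfl,
    sigPos_eq_one_iff_nonpos_on_orthogonal hB hw]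
  constructor
  · intro h x hx
    have hneg : 0 ≤ -(a * toBilin' A x x + c * toBilin' A w x ^ 2) :=
      hquad x ▸ h.dotProduct_mulVec_nonneg x
    rw [hx, sq, mul_zero, mul_zero, add_zero, neg_nonneg] at hneg
    exact nonpos_of_mul_nonpos_right hneg ha
  · intro h
    refine .of_dotProduct_mulVec_nonneg hherm fun x => ?_
    have hrcs := mul_apply_self_le_sq_of_nonpos_on_orthogonal hB hw h x
    rw [star_trivial, hquad, neg_nonneg]
    refine nonpos_of_mul_nonpos_right ?_ hw
    calc toBilin' A w w * (a * toBilin' A x x + c * toBilin' A w x ^ 2)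
        = a * (toBilin' A w w * toBilin' A x x) + c * toBilin' A w w * toBilin' A w x ^ 2 := by ring
      _ ≤ a * toBilin' A w x ^ 2 + c * toBilin' A w w * toBilin' A w x ^ 2 := by gcongr
      _ = (a + c * toBilin' A w w) * toBilin' A w x ^ 2 := by ring
      _ ≤ 0 := mul_nonpos_of_nonpos_of_nonneg hac (sq_nonneg _)

theorem exactlyOnePosEig_iff_sigPos_eq_one {n : ℕ} {A : Matrix (Fin n) (Fin n) ℝ}
    (hA : A.IsHermitian) : ExactlyOnePosEig A ↔ sigPos A.toQuadraticForm' = 1 := by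
  rw [ExactlyOnePosEig, exists_prop_of_true hA, sigPos_toQuadraticForm' hA,
    Set.ncard_eq_toFinset_card', Set.toFinset_ofPred]

end RealMatrix

section Calculus

theorem fderiv_fderiv_comp_apply {𝕜 E : Type*} [NontriviallyNormedField 𝕜] [NormedAddCommGroup E]
    [NormedSpace 𝕜 E] {g : E → 𝕜} {x : E} (hg : ContDiffAt 𝕜 2 g x) {φ φ' : 𝕜 → 𝕜} {c : 𝕜}
    (hφ : ∀ᶠ y in nhds (g x), HasDerivAt φ (φ' y) y) (hφ' : HasDerivAt φ' c (g x)) (u v : E) :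
    fderiv 𝕜 (fderiv 𝕜 (φ ∘ g)) x u v =
      φ' (g x) * fderiv 𝕜 (fderiv 𝕜 g) x u v + c * (fderiv 𝕜 g x u * fderiv 𝕜 g x v) := by
  have hdiff : ∀ᶠ z in nhds x, DifferentiableAt 𝕜 g z :=
    (hg.eventually (by simp)).mono fun z hz => hz.differentiableAt (by simp)
  have hfirst : fderiv 𝕜 (φ ∘ g) =ᶠ[nhds x] (φ' ∘ g) • fderiv 𝕜 g := by
    filter_upwards [hg.continuousAt.eventually hφ, hdiff] with z hz hgz
    exact (hz.comp_hasFDerivAt z hgz.hasFDerivAt).fderiv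
  have hsecond := (hφ'.comp_hasFDerivAt x hdiff.self_of_nhds.hasFDerivAt).smul
    ((hg.fderiv_right (m := 1) (by norm_num)).differentiableAt (by simp)).hasFDerivAt
  rw [hfirst.fderiv_eq, hsecond.fderiv]
  simp only [Function.comp_apply, _root_.add_apply, _root_.smul_apply,
    ContinuousLinearMap.smulRight_apply, smul_eq_mul]
  ring

theorem hasFDerivAt_eval_mvPolynomial {𝕜 σ : Type*} [NontriviallyNormedField 𝕜] [Fintype σ]
    (f : MvPolynomial σ 𝕜) (x : σ → 𝕜) :
    HasFDerivAt (fun y => eval y f)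
      (∑ i, eval x (pderiv i f) • (ContinuousLinearMap.proj i : (σ → 𝕜) →L[𝕜] 𝕜)) x := by
  classical
  induction f using MvPolynomial.induction_on with
  | C a =>
    simp only [eval_C]
    exact (hasFDerivAt_const a x).congr_fderiv (by ext v; simp)
  | add p q hp hq =>
    simp only [map_add]
    exact (hp.add hq).congr_fderiv (by ext v; simp [add_mul, Finset.sum_add_distrib])
  | mul_X p k hp =>
    simp only [map_mul, eval_X]
    refine (hp.mul (hasFDerivAt_apply k x)).congr_fderiv ?_
    ext v
    simp [pderiv_X, Pi.single_apply, Finset.mul_sum, Finset.sum_add_distrib, mul_add, apply_ite,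
      mul_comm, mul_left_comm]

theorem fderiv_eval_mvPolynomial_single {𝕜 σ : Type*} [NontriviallyNormedField 𝕜] [Finite σ]
    [DecidableEq σ] (f : MvPolynomial σ 𝕜) (x : σ → 𝕜) (i : σ) :
    fderiv 𝕜 (fun y => eval y f) x (Pi.single i 1) = eval x (pderiv i f) := by
  have := Fintype.ofFinite σ
  simp [(hasFDerivAt_eval_mvPolynomial f x).fderiv, Pi.single_apply]

theorem contDiff_eval_mvPolynomial {𝕜 σ : Type*} [NontriviallyNormedField 𝕜] [CompleteSpace 𝕜]
    [Fintype σ] {m : WithTop ℕ∞} (f : MvPolynomial σ 𝕜) : ContDiff 𝕜 m fun x => eval x f :=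
  (AnalyticOnNhd.eval_mvPolynomial f).contDiff

end Calculus

section PolynomialHessian

theorem pderiv_comm {σ R : Type*} [CommSemiring R] (i j : σ) (f : MvPolynomial σ R) :
    pderiv i (pderiv j f) = pderiv j (pderiv i f) := by
  classical
  induction f using MvPolynomial.induction_on with
  | C a => simp
  | add p q hp hq => simp [hp, hq]
  | mul_X p k hp =>
    have hX (l : σ) : pderiv l (X k : MvPolynomial σ R) = C (if k = l then 1 else 0) := by
      rw [pderiv_X, Pi.single_apply, apply_ite C, C_1, C_0]
    simp only [pderiv_mul, map_add, hX, pderiv_C, hp]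
    ring

/-- The gradient of a polynomial at `w`, built from formal partial derivatives to match
`polyHessian`; it carries the rank-one term of the Hessian of `φ ∘ f`. -/
noncomputable def polyGradient {σ R : Type*} [CommSemiring R] (f : MvPolynomial σ R) (w : σ → R) :
    σ → R :=
  fun i => eval w (pderiv i f)

theorem polyGradient_dotProduct_self {σ R : Type*} [CommSemiring R] [Fintype σ] {d : ℕ}
    {f : MvPolynomial σ R} (hf : f.IsHomogeneous d) (w : σ → R) :
    polyGradient f w ⬝ᵥ w = d * eval w f := by
  simpa [polyGradient, dotProduct, mul_comm] using congrArg (eval w) hf.sum_X_mul_pderiv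

variable {n d : ℕ} {f : MvPolynomial (Fin n) ℝ}

theorem polyHessian_isHermitian (f : MvPolynomial (Fin n) ℝ) (w : Fin n → ℝ) :
    (polyHessian f w).IsHermitian := by
  ext i j
  simp [polyHessian, pderiv_comm i j]

theorem polyHessian_mulVec_self (hf : f.IsHomogeneous d) (w : Fin n → ℝ) :
    polyHessian f w *ᵥ w = ((d - 1 : ℕ) : ℝ) • polyGradient f w := by
  ext i
  simpa [polyHessian, polyGradient, mulVec, dotProduct, pderiv_comm i] using
    polyGradient_dotProduct_self (hf.pderiv (i := i)) w

theorem dotProduct_polyHessian_mulVec_self (hf : f.IsHomogeneous d) (w : Fin n → ℝ) :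
    w ⬝ᵥ polyHessian f w *ᵥ w = ((d - 1 : ℕ) : ℝ) * (d * eval w f) := by
  rw [polyHessian_mulVec_self hf, dotProduct_smul, dotProduct_comm,
    polyGradient_dotProduct_self hf, smul_eq_mul]

theorem funHessian_eval (f : MvPolynomial (Fin n) ℝ) (w : Fin n → ℝ) :
    funHessian (fun x => eval x f) w = polyHessian f w := by
  ext i j
  have hdiff : DifferentiableAt ℝ (fderiv ℝ fun x => eval x f) w :=
    ((contDiff_eval_mvPolynomial f).fderiv_right (m := 1) le_top).differentiable one_ne_zero w
  have hcol : (fun x => fderiv ℝ (fun y => eval y f) x (Pi.single j 1)) =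
      fun x => eval x (pderiv j f) :=
    funext fun x => fderiv_eval_mvPolynomial_single f x j
  have hentry := fderiv_clm_apply hdiff (differentiableAt_const (Pi.single j 1))
  rw [hcol] at hentry
  simpa [funHessian, polyHessian, iteratedFDeriv_two_apply, fderiv_eval_mvPolynomial_single,
    eq_comm] using DFunLike.congr_fun hentry (Pi.single i 1)

theorem funHessian_comp_eval (f : MvPolynomial (Fin n) ℝ) {w : Fin n → ℝ} {φ φ' : ℝ → ℝ} {c : ℝ}
    (hφ : ∀ᶠ y in nhds (eval w f), HasDerivAt φ (φ' y) y)
    (hφ' : HasDerivAt φ' c (eval w f)) :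
    funHessian (fun x => φ (eval x f)) w = φ' (eval w f) • polyHessian f w +
      c • vecMulVec (polyGradient f w) (polyGradient f w) := by
  ext i j
  simp only [← funHessian_eval, funHessian, polyGradient, of_apply, iteratedFDeriv_two_apply,
    Matrix.add_apply, Matrix.smul_apply, smul_eq_mul, vecMulVec_apply,
    ← fderiv_eval_mvPolynomial_single]
  exact fderiv_fderiv_comp_apply (contDiff_eval_mvPolynomial f).contDiffAt hφ hφ' _ _

theorem posSemidef_neg_funHessian_comp_eval_iff (hd : 2 ≤ d) (hf : f.IsHomogeneous d)
    {w : Fin n → ℝ} (hw : 0 < eval w f) {φ φ' : ℝ → ℝ} {c : ℝ}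
    (hφ : ∀ᶠ y in nhds (eval w f), HasDerivAt φ (φ' y) y)
    (hφ' : HasDerivAt φ' c (eval w f)) (hpos : 0 < φ' (eval w f))
    (hray : (d - 1) * φ' (eval w f) + d * eval w f * c ≤ 0) :
    (-(funHessian (fun x => φ (eval x f)) w)).PosSemidef ↔
      ExactlyOnePosEig (polyHessian f w) := by
  -- `hray` says that `t ↦ φ (f (t w)) = φ (t ^ d * f w)` has second derivative `≤ 0` at `t = 1`.
  have hcast : ((d - 1 : ℕ) : ℝ) = d - 1 := Nat.cast_pred (by omega)
  have hd1 : (0 : ℝ) < d - 1 := by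
    rw [← hcast, Nat.cast_pos]
    omega
  have hgrad : polyGradient f w = (d - 1 : ℝ)⁻¹ • (polyHessian f w *ᵥ w) := by
    rw [polyHessian_mulVec_self hf, hcast, inv_smul_smul₀ hd1.ne']
  have hquad : w ⬝ᵥ polyHessian f w *ᵥ w = (d - 1) * (d * eval w f) := by
    rw [dotProduct_polyHessian_mulVec_self hf, hcast]
  rw [funHessian_comp_eval f hφ hφ', hgrad, smul_vecMulVec, vecMulVec_smul, smul_smul, smul_smul,
    exactlyOnePosEig_iff_sigPos_eq_one (polyHessian_isHermitian f w)]
  refine posSemidef_neg_smul_add_vecMulVec_iff (polyHessian_isHermitian f w) ?_ hpos ?_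
  · rw [hquad]
    positivity
  · rw [hquad]
    refine nonpos_of_mul_nonpos_right (hray.trans_eq' ?_) hd1
    field_simp

end PolynomialHessian

theorem stmt4 {n d : ℕ} (hn : 2 ≤ n) (hd : 2 ≤ d) (f : MvPolynomial (Fin n) ℝ)
    (hf : f.IsHomogeneous d) (w : Fin n → ℝ) (hw : 0 < eval w f) :
    ((-(funHessian (fun x => eval x f ^ ((d : ℝ)⁻¹)) w)).PosSemidef ↔
        ExactlyOnePosEig (polyHessian f w)) ∧
    ((-(funHessian (fun x => Real.log (eval x f)) w)).PosSemidef ↔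
        ExactlyOnePosEig (polyHessian f w)) := by
  constructor
  · refine posSemidef_neg_funHessian_comp_eval_iff hd hf hw (φ := (· ^ (d : ℝ)⁻¹))
      ((eventually_ne_nhds hw.ne').mono fun y hy => Real.hasDerivAt_rpow_const (Or.inl hy))
      ((Real.hasDerivAt_rpow_const (Or.inl hw.ne')).const_mul _) (by positivity) (le_of_eq ?_)
    rw [Real.rpow_sub_one hw.ne' ((d : ℝ)⁻¹ - 1)]
    field_simp
    ring
  · refine posSemidef_neg_funHessian_comp_eval_iff hd hf hw (φ := Real.log)
      ((eventually_ne_nhds hw.ne').mono fun y hy => Real.hasDerivAt_log hy)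
      (hasDerivAt_inv hw.ne') (by positivity) ?_
    field_simp
    linarith
end

section
/- For any matroid M on [n] and any positive integer k, I_k(M)²/C(n,k)² ≥ (I_{k+1}(M)/C(n,k+1))·(I_{k−1}(M)/C(n,k−1)), where I_k(M) is the number of k-element independent sets of M. (Mason's strongest conjecture.) -/
/-- The number of `k`-element independent sets of a matroid. -/
noncomputable def numIndep {n : ℕ} (M : Matroid (Fin n)) (k : ℕ) : ℕ :=
  Nat.card {A : Finset (Fin n) // A.card = k ∧ M.Indep ↑A}

/-!
Let `G v = ∑ A, x ^ A * y ^ (n - |A|)`, the sum being over the independent sets `A`, be the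
homogenized independence polynomial. The heart of the matter is that at every positive point `v` the
Hessian `H` of each partial derivative of `G` has at most one positive eigenvalue, in the form of
the reverse Cauchy–Schwarz inequality `(w ⬝ᵥ H *ᵥ w) * (v ⬝ᵥ H *ᵥ v) ≤ (w ⬝ᵥ H *ᵥ v) ^ 2`. Taking
for `w` the direction of `y`, this is Newton's inequality for the derivatives of `G` in `y`; at
`x = 1` and as `y → 0` it becomes the inequality between three consecutive `I_k`.

For a quadratic derivative, differentiating by `x ^ S` amounts to contracting `S`. The nonloops of
`M ／ S` fall into parallel classes, of which there are at most `n - |S|`, and independence of pairs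
is adjacency in the complete multipartite graph on these classes; Cauchy–Schwarz over the classes
gives the claim.

In higher degree, Euler's identity makes `H` a positive combination of the Hessians of the next
derivatives, for which reverse Cauchy–Schwarz is known by induction. Together these give
`H ≤ H * D⁻¹ * H`, where `D` is the diagonal matrix with `D *ᵥ v = H *ᵥ v`. The Laplacian `D - H` is
positive semidefinite, and on the variables that occur its kernel is spanned by `v`, because each of
them is joined to `y`; so the eigenvalues of `H` relative to `D` are at most `1`, with `1` simple,
and the inequality leaves none in the open interval from `0` to `1`.
-/

open Finset Matrix
open scoped Matroid Nat

section Lorentzian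

theorem dotProduct_mulVec_comm_of_isSymm {ι R : Type*} [Fintype ι] [CommSemiring R]
    {H : Matrix ι ι R} (hH : H.IsSymm) (x y : ι → R) : x ⬝ᵥ H *ᵥ y = y ⬝ᵥ H *ᵥ x := by
  simpa only [hH.eq] using dotProduct_transpose_mulVec H x y

theorem exists_mulVec_eq_of_isSymm {ι K : Type*} [Fintype ι] [Field K]
    {L : Matrix ι ι K} (hL : L.IsSymm) {b : ι → K} (hb : ∀ x, L *ᵥ x = 0 → x ⬝ᵥ b = 0) :
    ∃ y, L *ᵥ y = b := by
  classical
  by_contra h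
  obtain ⟨f, hfb, hf⟩ := Submodule.exists_le_ker_of_notMem (p := L.mulVecLin.range) (v := b) h
  obtain ⟨x, rfl⟩ := (dotProductEquiv K ι).surjective f
  refine hfb (hb x (dotProduct_eq_zero _ fun y => ?_))
  rw [dotProduct_comm, dotProduct_mulVec_comm_of_isSymm hL]
  exact hf ⟨y, rfl⟩

variable {ι : Type*} [Fintype ι] {H : Matrix ι ι ℝ} {v : ι → ℝ}

/-- The reverse Cauchy–Schwarz inequality at `v` for the quadratic form `H`. For a symmetric `H` and
`v` with `0 < v ⬝ᵥ H *ᵥ v` it says that `H` has exactly one positive eigenvalue. -/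
def IsLorentzianAt (H : Matrix ι ι ℝ) (v : ι → ℝ) : Prop :=
  ∀ w, (w ⬝ᵥ H *ᵥ w) * (v ⬝ᵥ H *ᵥ v) ≤ (w ⬝ᵥ H *ᵥ v) ^ 2

theorem isLorentzianAt_of_nonpos_of_orthogonal (hH : H.IsSymm) (hv : 0 ≤ v ⬝ᵥ H *ᵥ v)
    (h : ∀ z, z ⬝ᵥ H *ᵥ v = 0 → z ⬝ᵥ H *ᵥ z ≤ 0) : IsLorentzianAt H v := by
  intro w
  rcases hv.eq_or_lt with hv | hv
  · rw [← hv, mul_zero]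
    positivity
  have hz := h ((v ⬝ᵥ H *ᵥ v) • w - (w ⬝ᵥ H *ᵥ v) • v) (by
    simp only [sub_dotProduct, smul_dotProduct, smul_eq_mul]
    ring)
  simp only [sub_dotProduct, smul_dotProduct, mulVec_sub, mulVec_smul, dotProduct_sub,
    dotProduct_smul, smul_eq_mul, dotProduct_mulVec_comm_of_isSymm hH v w] at hz
  refine le_of_mul_le_mul_left ?_ hv
  linarith

theorem IsLorentzianAt.of_pos {e : ι → ℝ} (hH : H.IsSymm) (he : IsLorentzianAt H e)
    (he_pos : 0 < e ⬝ᵥ H *ᵥ e) (hv : 0 ≤ v ⬝ᵥ H *ᵥ v) : IsLorentzianAt H v := by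
  rcases hv.eq_or_lt with hv | hv
  · intro w
    rw [← hv, mul_zero]
    positivity
  refine isLorentzianAt_of_nonpos_of_orthogonal hH hv.le fun z hzv => ?_
  have hve : 0 < (v ⬝ᵥ H *ᵥ e) ^ 2 := (mul_pos hv he_pos).trans_le (he v)
  have hu := he ((z ⬝ᵥ H *ᵥ e) • v - (v ⬝ᵥ H *ᵥ e) • z)
  simp only [sub_dotProduct, smul_dotProduct, mulVec_sub, mulVec_smul, dotProduct_sub,
    dotProduct_smul, smul_eq_mul, dotProduct_mulVec_comm_of_isSymm hH v z, hzv] at hu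
  have hsum : (z ⬝ᵥ H *ᵥ e) ^ 2 * (v ⬝ᵥ H *ᵥ v) + (v ⬝ᵥ H *ᵥ e) ^ 2 * (z ⬝ᵥ H *ᵥ z) ≤ 0 :=
    nonpos_of_mul_nonpos_left (by linarith) he_pos
  refine nonpos_of_mul_nonpos_right ?_ hve
  linarith [mul_nonneg (sq_nonneg (z ⬝ᵥ H *ᵥ e)) hv.le]

section Laplacian

variable [DecidableEq ι]

/-- The Laplacian, in the coordinates `x i / v i`, of the graph with edge weights
`H i j * v i * v j`. It is the matrix `D - H` with `D` diagonal that annihilates `v`. -/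
noncomputable def laplacianAt (H : Matrix ι ι ℝ) (v : ι → ℝ) : Matrix ι ι ℝ :=
  diagonal (fun i => (H *ᵥ v) i / v i) - H

theorem laplacianAt_mulVec (x : ι → ℝ) :
    laplacianAt H v *ᵥ x = (fun i => (H *ᵥ v) i / v i * x i) - H *ᵥ x := by
  ext i
  simp only [laplacianAt, sub_mulVec, Pi.sub_apply, mulVec_diagonal]

theorem laplacianAt_isSymm (hH : H.IsSymm) : (laplacianAt H v).IsSymm :=
  (isSymm_diagonal _).sub hH

theorem two_mul_dotProduct_laplacianAt_mulVec (hH : H.IsSymm) (hv : ∀ i, v i ≠ 0) (x : ι → ℝ) :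
    2 * (x ⬝ᵥ laplacianAt H v *ᵥ x) =
      ∑ i, ∑ j, H i j * v i * v j * (x i / v i - x j / v j) ^ 2 := by
  have hdiag : ∑ i, x i * ((H *ᵥ v) i / v i * x i) =
      ∑ i, ∑ j, H i j * v i * v j * (x i / v i) ^ 2 := by
    refine sum_congr rfl fun i _ => ?_
    have := hv i
    simp only [mulVec, dotProduct, sum_div, sum_mul, mul_sum]
    refine sum_congr rfl fun j _ => ?_
    field_simp
  have hdiag' : ∑ i, x i * ((H *ᵥ v) i / v i * x i) =
      ∑ i, ∑ j, H i j * v i * v j * (x j / v j) ^ 2 := by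
    rw [hdiag, sum_comm]
    refine sum_congr rfl fun i _ => sum_congr rfl fun j _ => ?_
    rw [hH.apply i j]
    ring
  have hcross : x ⬝ᵥ H *ᵥ x = ∑ i, ∑ j, H i j * v i * v j * (x i / v i * (x j / v j)) := by
    simp only [dotProduct, mulVec, mul_sum]
    refine sum_congr rfl fun i _ => sum_congr rfl fun j _ => ?_
    have := hv i
    have := hv j
    field_simp
  calc 2 * (x ⬝ᵥ laplacianAt H v *ᵥ x)
      = ∑ i, x i * ((H *ᵥ v) i / v i * x i) + ∑ i, x i * ((H *ᵥ v) i / v i * x i)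
          - 2 * (x ⬝ᵥ H *ᵥ x) := by
        rw [laplacianAt_mulVec, dotProduct_sub, dotProduct]
        ring
    _ = _ := by
        nth_rw 1 [hdiag]
        rw [hdiag', hcross]
        simp only [mul_sum, ← sum_add_distrib, ← sum_sub_distrib]
        exact sum_congr rfl fun i _ => sum_congr rfl fun j _ => by ring

theorem dotProduct_laplacianAt_mulVec_nonneg (hH : H.IsSymm) (hnn : ∀ i j, 0 ≤ H i j)
    (hv : ∀ i, 0 < v i) (x : ι → ℝ) : 0 ≤ x ⬝ᵥ laplacianAt H v *ᵥ x := by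
  refine nonneg_of_mul_nonneg_right ?_ (two_pos : (0 : ℝ) < 2)
  rw [two_mul_dotProduct_laplacianAt_mulVec hH fun i => (hv i).ne']
  exact sum_nonneg fun i _ => sum_nonneg fun j _ =>
    mul_nonneg (mul_nonneg (mul_nonneg (hnn i j) (hv i).le) (hv j).le) (sq_nonneg _)

theorem div_eq_div_of_laplacianAt_mulVec_eq_zero (hH : H.IsSymm) (hnn : ∀ i j, 0 ≤ H i j)
    (hv : ∀ i, 0 < v i) {x : ι → ℝ} (hx : laplacianAt H v *ᵥ x = 0) {i j : ι} (hij : H i j ≠ 0) :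
    x i / v i = x j / v j := by
  have hterm (i j : ι) : 0 ≤ H i j * v i * v j * (x i / v i - x j / v j) ^ 2 :=
    mul_nonneg (mul_nonneg (mul_nonneg (hnn i j) (hv i).le) (hv j).le) (sq_nonneg _)
  have hsum := two_mul_dotProduct_laplacianAt_mulVec hH (fun i => (hv i).ne') x
  rw [hx, dotProduct_zero, mul_zero, eq_comm,
    sum_eq_zero_iff_of_nonneg fun i _ => sum_nonneg fun j _ => hterm i j] at hsum
  have hi := hsum i (mem_univ i)
  rw [sum_eq_zero_iff_of_nonneg fun j _ => hterm i j] at hi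
  have hweight : H i j * v i * v j ≠ 0 := mul_ne_zero (mul_ne_zero hij (hv i).ne') (hv j).ne'
  simpa [hweight, sub_eq_zero] using hi j (mem_univ j)

theorem exists_laplacianAt_mulVec_eq (hH : H.IsSymm) (hnn : ∀ i j, 0 ≤ H i j)
    (hv : ∀ i, 0 < v i) {i₀ : ι} (hstar : ∀ i, H i i₀ = 0 → ∀ j, H i j = 0)
    {z : ι → ℝ} (hz : z ⬝ᵥ H *ᵥ v = 0) :
    ∃ y, laplacianAt H v *ᵥ y = fun i => (H *ᵥ v) i / v i * z i := by
  refine exists_mulVec_eq_of_isSymm (laplacianAt_isSymm hH) fun x hx => ?_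
  have hprop (i : ι) : x i / v i * (H *ᵥ v) i = x i₀ / v i₀ * (H *ᵥ v) i := by
    rcases eq_or_ne (H i i₀) 0 with hi | hi
    · have : (H *ᵥ v) i = 0 := sum_eq_zero fun j _ => by simp only [hstar i hi j, zero_mul]
      rw [this, mul_zero, mul_zero]
    · rw [div_eq_div_of_laplacianAt_mulVec_eq_zero hH hnn hv hx hi]
  calc ∑ i, x i * ((H *ᵥ v) i / v i * z i)
      = ∑ i, x i₀ / v i₀ * (z i * (H *ᵥ v) i) := by
        refine sum_congr rfl fun i _ => ?_
        linear_combination z i * hprop i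
    _ = x i₀ / v i₀ * (z ⬝ᵥ H *ᵥ v) := (mul_sum _ _ _).symm
    _ = 0 := by rw [hz, mul_zero]

end Laplacian

theorem IsLorentzianAt.dotProduct_mulVec_le_div {T : Matrix ι ι ℝ} (hT : IsLorentzianAt T v)
    (hnn : ∀ i j, 0 ≤ T i j) (hv : ∀ i, 0 < v i) (y : ι → ℝ) :
    y ⬝ᵥ T *ᵥ y ≤ (y ⬝ᵥ T *ᵥ v) ^ 2 / (v ⬝ᵥ T *ᵥ v) := by
  have hrow (i : ι) : 0 ≤ (T *ᵥ v) i := sum_nonneg fun j _ => mul_nonneg (hnn i j) (hv j).le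
  have hterm (i : ι) : 0 ≤ v i * (T *ᵥ v) i := mul_nonneg (hv i).le (hrow i)
  rcases (sum_nonneg fun i _ => hterm i : 0 ≤ v ⬝ᵥ T *ᵥ v).eq_or_lt with h | h
  · have hT0 (i j : ι) : T i j = 0 := by
      have hi := (sum_eq_zero_iff_of_nonneg fun i _ => hterm i).1 h.symm i (mem_univ i)
      have hij := (sum_eq_zero_iff_of_nonneg fun j _ => mul_nonneg (hnn i j) (hv j).le).1
        ((mul_eq_zero.1 hi).resolve_left (hv i).ne') j (mem_univ j)
      exact (mul_eq_zero.1 hij).resolve_right (hv j).ne'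
    simp [dotProduct, mulVec, hT0]
  · exact (le_div_iff₀ h).2 (hT y)

/-- With `L = D - H` the Laplacian, the hypothesis `hB` says `H ≤ H D⁻¹ H`. A vector `z` that is
`H`-orthogonal to `v` satisfies `D z = L y` for some `y`; expanding `0 ≤ (y - z) ⬝ᵥ L *ᵥ (y - z)`
and using `hB` at `y` then yields `z ⬝ᵥ H *ᵥ z ≤ 0`. -/
theorem isLorentzianAt_of_dotProduct_mulVec_le (hH : H.IsSymm) (hnn : ∀ i j, 0 ≤ H i j)
    (hv : ∀ i, 0 < v i) {i₀ : ι} (hstar : ∀ i, H i i₀ = 0 → ∀ j, H i j = 0)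
    (hB : ∀ y, y ⬝ᵥ H *ᵥ y ≤ ∑ i, v i * ((H *ᵥ y) i ^ 2 / (H *ᵥ v) i)) :
    IsLorentzianAt H v := by
  classical
  have hr (i : ι) : 0 ≤ (H *ᵥ v) i := sum_nonneg fun j _ => mul_nonneg (hnn i j) (hv j).le
  refine isLorentzianAt_of_nonpos_of_orthogonal hH
    (sum_nonneg fun i _ => mul_nonneg (hv i).le (hr i)) fun z hz => ?_
  set D : ι → ℝ := fun i => (H *ᵥ v) i / v i with hD
  obtain ⟨y, hy⟩ : ∃ y, laplacianAt H v *ᵥ y = D * z :=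
    exists_laplacianAt_mulVec_eq hH hnn hv hstar hz
  have hL (x : ι → ℝ) : laplacianAt H v *ᵥ x = D * x - H *ᵥ x := laplacianAt_mulVec x
  have hHy : H *ᵥ y = D * (y - z) := by
    rw [mul_sub, ← hy, hL, sub_sub_cancel]
  have hzHy : z ⬝ᵥ H *ᵥ y ≤ 0 := by
    have hBy : y ⬝ᵥ H *ᵥ y ≤ (y - z) ⬝ᵥ H *ᵥ y := by
      refine (hB y).trans_eq (sum_congr rfl fun i _ => ?_)
      have := (hv i).ne'
      simp only [hHy, hD, Pi.mul_apply, Pi.sub_apply]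
      rcases eq_or_ne ((H *ᵥ v) i) 0 with h | h
      · simp only [h, zero_div, zero_mul, div_zero, mul_zero]
      · field_simp
    rw [sub_dotProduct] at hBy
    linarith
  have hyLz : y ⬝ᵥ laplacianAt H v *ᵥ z = z ⬝ᵥ (D * z) := by
    rw [dotProduct_mulVec_comm_of_isSymm (laplacianAt_isSymm hH), hy]
  have hyDz : y ⬝ᵥ (D * z) = z ⬝ᵥ (D * z) + z ⬝ᵥ H *ᵥ y := by
    rw [← hyLz, hL, dotProduct_sub, dotProduct_mulVec_comm_of_isSymm hH y, sub_add_cancel]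
  have hpos := dotProduct_laplacianAt_mulVec_nonneg hH hnn hv (y - z)
  rw [mulVec_sub, hy, sub_dotProduct, dotProduct_sub, dotProduct_sub, hyLz, hyDz, hL z,
    dotProduct_sub] at hpos
  linarith

theorem isLorentzianAt_of_slices (hH : H.IsSymm) (hv : ∀ i, 0 < v i) {i₀ : ι}
    (hstar : ∀ i, H i i₀ = 0 → ∀ j, H i j = 0) {T : ι → Matrix ι ι ℝ}
    (hTnn : ∀ i j k, 0 ≤ T i j k) (hT : ∀ i, IsLorentzianAt (T i) v) {c : ℝ} (hc : 0 < c)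
    (hTv : ∀ i, T i *ᵥ v = c • H i) (hsum : ∑ i, v i • T i = c • H) : IsLorentzianAt H v := by
  have hnn (i j : ι) : 0 ≤ H i j := by
    refine nonneg_of_mul_nonneg_right (a := c) ?_ hc
    rw [← smul_eq_mul, ← Pi.smul_apply, ← hTv]
    exact sum_nonneg fun k _ => mul_nonneg (hTnn i j k) (hv k).le
  refine isLorentzianAt_of_dotProduct_mulVec_le hH hnn hv hstar fun y => ?_
  have hrow (x : ι → ℝ) (i : ι) : x ⬝ᵥ T i *ᵥ v = c * (H *ᵥ x) i := by
    rw [hTv, dotProduct_smul, dotProduct_comm, smul_eq_mul, mulVec]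
  refine le_of_mul_le_mul_left ?_ hc
  calc c * (y ⬝ᵥ H *ᵥ y)
      = ∑ i, v i * (y ⬝ᵥ T i *ᵥ y) := by
        rw [← smul_eq_mul, ← dotProduct_smul, ← smul_mulVec, ← hsum, sum_mulVec, dotProduct_sum]
        simp only [smul_mulVec, dotProduct_smul, smul_eq_mul]
    _ ≤ ∑ i, v i * ((c * (H *ᵥ y) i) ^ 2 / (c * (H *ᵥ v) i)) := by
        refine sum_le_sum fun i _ => mul_le_mul_of_nonneg_left ?_ (hv i).le
        rw [← hrow, ← hrow]
        exact (hT i).dotProduct_mulVec_le_div (hTnn i) hv y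
    _ = c * ∑ i, v i * ((H *ᵥ y) i ^ 2 / (H *ᵥ v) i) := by
        rw [mul_sum]
        refine sum_congr rfl fun i _ => ?_
        rw [mul_pow, mul_div_mul_comm, sq c, mul_div_cancel_right₀ c hc.ne']
        ring

end Lorentzian

section Jet

variable {ι : Type*} {F : Multiset ι → ℝ} {v : ι → ℝ} {N : ℕ}

/-- The Hessian matrix of the `m`-th partial derivative, for a family `F` of partial derivatives
indexed by multisets of variables. -/
def hessian (F : Multiset ι → ℝ) (m : Multiset ι) : Matrix ι ι ℝ :=
  of fun i j => F (i ::ₘ j ::ₘ m)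

theorem hessian_isSymm (F : Multiset ι → ℝ) (m : Multiset ι) : (hessian F m).IsSymm :=
  IsSymm.ext fun i j => congrArg F (Multiset.cons_swap j i m)

variable [Fintype ι]

/-- Euler's identities for the family `F` of values at `v` of the partial derivatives of a
homogeneous polynomial of degree `N`. -/
def IsHomogeneousJet (F : Multiset ι → ℝ) (v : ι → ℝ) (N : ℕ) : Prop :=
  ∀ m, ∑ i, F (i ::ₘ m) * v i = ((N : ℝ) - m.card) * F m

namespace IsHomogeneousJet

theorem hessian_mulVec (hF : IsHomogeneousJet F v N) (m : Multiset ι) :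
    hessian F m *ᵥ v = fun i => ((N : ℝ) - m.card - 1) * F (i ::ₘ m) := by
  ext i
  have h := hF (i ::ₘ m)
  simp only [Multiset.card_cons, Nat.cast_add, Nat.cast_one, Multiset.cons_swap _ i] at h
  rw [sub_sub]
  exact h

theorem hessian_cons_mulVec (hF : IsHomogeneousJet F v N) (m : Multiset ι) (i : ι) :
    hessian F (i ::ₘ m) *ᵥ v = ((N : ℝ) - m.card - 2) • hessian F m i := by
  rw [hF.hessian_mulVec]
  ext j
  simp only [hessian, of_apply, Pi.smul_apply, smul_eq_mul, Multiset.card_cons, Nat.cast_add,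
    Nat.cast_one, Multiset.cons_swap j i]
  ring

theorem sum_smul_hessian_cons (hF : IsHomogeneousJet F v N) (m : Multiset ι) :
    ∑ i, v i • hessian F (i ::ₘ m) = ((N : ℝ) - m.card - 2) • hessian F m := by
  ext j k
  calc (∑ i, v i • hessian F (i ::ₘ m)) j k
      = ∑ i, hessian F (j ::ₘ m) k i * v i := by
        rw [Matrix.sum_apply]
        refine sum_congr rfl fun i _ => ?_
        change v i * F (j ::ₘ k ::ₘ i ::ₘ m) = F (k ::ₘ i ::ₘ j ::ₘ m) * v i
        rw [mul_comm, Multiset.cons_swap j k, Multiset.cons_swap j i]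
    _ = (((N : ℝ) - m.card - 2) • hessian F m) j k := congrFun (hF.hessian_cons_mulVec m j) k

theorem isLorentzianAt_hessian (hF : IsHomogeneousJet F v N) (hnn : ∀ m, 0 ≤ F m)
    (hv : ∀ i, 0 < v i) {i₀ : ι}
    (hstar : ∀ m i, F (i ::ₘ i₀ ::ₘ m) = 0 → ∀ j, F (i ::ₘ j ::ₘ m) = 0)
    (hquad : ∀ m, m.card + 2 = N → IsLorentzianAt (hessian F m) v)
    {m : Multiset ι} (hm : m.card + 2 ≤ N) : IsLorentzianAt (hessian F m) v := by
  obtain ⟨d, rfl⟩ := Nat.exists_eq_add_of_le hm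
  induction d generalizing m with
  | zero => exact hquad m rfl
  | succ d ih =>
    refine isLorentzianAt_of_slices (T := fun i => hessian F (i ::ₘ m)) (hessian_isSymm F m) hv
      (hstar m) (fun i j k => hnn _) (fun i => ?_) ?_ (hF.hessian_cons_mulVec m)
      (hF.sum_smul_hessian_cons m)
    · have hcard : (i ::ₘ m).card + 2 + d = m.card + 2 + (d + 1) := by
        rw [Multiset.card_cons]
        lia
      rw [← hcard] at hF hquad
      exact ih hF hquad (Nat.le_add_right _ _)
    · push_cast
      linarith [(d.cast_nonneg : (0 : ℝ) ≤ d)]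

theorem mul_le_sq (hF : IsHomogeneousJet F v N) {m : Multiset ι} {d : ℕ}
    (hm : m.card + (d + 2) = N) (hL : IsLorentzianAt (hessian F m) v) (i : ι) :
    (d + 2) * (F (i ::ₘ i ::ₘ m) * F m) ≤ (d + 1) * F (i ::ₘ m) ^ 2 := by
  classical
  have hd : (N : ℝ) - m.card = d + 2 := by
    rw [← hm]
    push_cast
    ring
  have hvv : v ⬝ᵥ hessian F m *ᵥ v = (d + 1) * ((d + 2) * F m) := by
    rw [hF.hessian_mulVec, ← hd, ← hF m, mul_sum, dotProduct]
    refine sum_congr rfl fun i _ => ?_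
    rw [hd]
    ring
  have h := hL (Pi.single i 1)
  rw [hvv, hF.hessian_mulVec, mulVec_single_one, single_one_dotProduct, single_one_dotProduct,
    hd] at h
  have hpos : (0 : ℝ) < d + 1 := by positivity
  refine le_of_mul_le_mul_left ?_ hpos
  simp only [col_apply, hessian, of_apply] at h
  linarith

end IsHomogeneousJet

end Jet

section HomogeneousSupport

variable {ι : Type*} [Fintype ι] [DecidableEq ι] {P : Finset (Multiset ι)} {v : ι → ℝ}

/-- The value at `v` of the `m`-th partial derivative of the monomial with exponent `e`. -/
noncomputable def monomialDeriv (v : ι → ℝ) (e m : Multiset ι) : ℝ :=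
  ∏ i, ((e.count i).descFactorial (m.count i) * v i ^ (e.count i - m.count i))

theorem monomialDeriv_nonneg (hv : ∀ i, 0 ≤ v i) (e m : Multiset ι) : 0 ≤ monomialDeriv v e m :=
  prod_nonneg fun i _ => mul_nonneg (Nat.cast_nonneg _) (pow_nonneg (hv i) _)

theorem monomialDeriv_eq_zero_iff (hv : ∀ i, v i ≠ 0) {e m : Multiset ι} :
    monomialDeriv v e m = 0 ↔ ¬m ≤ e := by
  simp [monomialDeriv, prod_eq_zero_iff, hv, Multiset.le_iff_count]

theorem monomialDeriv_self (v : ι → ℝ) (e : Multiset ι) :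
    monomialDeriv v e e = ∏ i, ((e.count i)! : ℝ) := by
  simp [monomialDeriv, Nat.descFactorial_self]

theorem monomialDeriv_cons_mul (v : ι → ℝ) (e m : Multiset ι) (i : ι) :
    monomialDeriv v e (i ::ₘ m) * v i = ((e.count i : ℝ) - m.count i) * monomialDeriv v e m := by
  have hrest : ∏ j ∈ univ.erase i, ((e.count j).descFactorial ((i ::ₘ m).count j) *
      v j ^ (e.count j - (i ::ₘ m).count j)) =
      ∏ j ∈ univ.erase i, ((e.count j).descFactorial (m.count j) *
        v j ^ (e.count j - m.count j)) :=
    prod_congr rfl fun j hj => by rw [Multiset.count_cons_of_ne (ne_of_mem_erase hj)]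
  rw [monomialDeriv, monomialDeriv, ← mul_prod_erase univ _ (mem_univ i), hrest,
    ← mul_prod_erase univ (fun j => _ * v j ^ (_ - m.count j)) (mem_univ i),
    Multiset.count_cons_self, mul_right_comm, ← mul_assoc]
  congr 1
  rcases lt_or_ge (m.count i) (e.count i) with h | h
  · rw [Nat.descFactorial_succ, mul_assoc, ← pow_succ,
      show e.count i - (m.count i + 1) + 1 = e.count i - m.count i by lia, Nat.cast_mul,
      Nat.cast_sub h.le, mul_assoc]
  · rw [Nat.descFactorial_of_lt (Nat.lt_succ_of_le h)]
    rcases h.eq_or_lt with h | h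
    · simp [h]
    · simp [Nat.descFactorial_of_lt h]

/-- The values at `v` of all partial derivatives of the polynomial `∑ e ∈ P, x ^ e`. -/
noncomputable def jet (P : Finset (Multiset ι)) (v : ι → ℝ) (m : Multiset ι) : ℝ :=
  ∑ e ∈ P, monomialDeriv v e m

theorem jet_nonneg (hv : ∀ i, 0 ≤ v i) (m : Multiset ι) : 0 ≤ jet P v m :=
  sum_nonneg fun e _ => monomialDeriv_nonneg hv e m

theorem jet_isHomogeneousJet {N : ℕ} (hP : ∀ e ∈ P, e.card = N) (v : ι → ℝ) :
    IsHomogeneousJet (jet P v) v N := by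
  intro m
  simp only [jet, sum_mul, monomialDeriv_cons_mul]
  rw [sum_comm, mul_sum]
  refine sum_congr rfl fun e he => ?_
  rw [← sum_mul, sum_sub_distrib, ← Nat.cast_sum, ← Nat.cast_sum,
    Multiset.sum_count_eq_card fun i _ => mem_univ i,
    Multiset.sum_count_eq_card fun i _ => mem_univ i, hP e he]

theorem jet_eq_zero_iff (hv : ∀ i, 0 < v i) {m : Multiset ι} :
    jet P v m = 0 ↔ ∀ e ∈ P, ¬m ≤ e := by
  rw [jet, sum_eq_zero_iff_of_nonneg fun e _ => monomialDeriv_nonneg (fun i => (hv i).le) e m]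
  simp only [monomialDeriv_eq_zero_iff fun i => (hv i).ne']

theorem jet_eq_ite {N : ℕ} (hP : ∀ e ∈ P, e.card = N) (hv : ∀ i, v i ≠ 0) {m : Multiset ι}
    (hm : m.card = N) : jet P v m = if m ∈ P then ∏ i, ((m.count i)! : ℝ) else 0 := by
  have hzero : ∀ e ∈ P, e ≠ m → monomialDeriv v e m = 0 := fun e he hne =>
    (monomialDeriv_eq_zero_iff hv).2 fun hle =>
      hne (Multiset.eq_of_le_of_card_le hle (by rw [hP e he, hm])).symm
  split_ifs with h
  · rw [jet, sum_eq_single_of_mem m h hzero, monomialDeriv_self]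
  · exact sum_eq_zero fun e he => hzero e he fun hem => h (hem ▸ he)

theorem jet_cons_cons_eq_zero_of_replace (hv : ∀ i, 0 < v i) {i₀ : ι}
    (hP : ∀ e ∈ P, ∀ j ∈ e, i₀ ::ₘ e.erase j ∈ P) {m : Multiset ι} {i : ι}
    (h : jet P v (i ::ₘ i₀ ::ₘ m) = 0) (j : ι) : jet P v (i ::ₘ j ::ₘ m) = 0 := by
  rw [jet_eq_zero_iff hv] at h ⊢
  intro e he hle
  rw [Multiset.cons_swap] at hle
  have hj : j ∈ e := Multiset.mem_of_le hle (Multiset.mem_cons_self _ _)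
  refine h _ (hP e he j hj) ?_
  rw [Multiset.cons_swap]
  refine (Multiset.cons_le_cons_iff i₀).2 ?_
  simpa only [Multiset.erase_cons_head] using Multiset.erase_le_erase j hle

end HomogeneousSupport

section Multipartite

variable {κ γ : Type*} [DecidableEq γ] {L : Finset κ} {f : κ → γ} {p : ℕ}

theorem sq_sum_le_mul_sum_sum_ite (hp : #(L.image f) ≤ p) (u : κ → ℝ) :
    (∑ x ∈ L, u x) ^ 2 ≤ p * ∑ x ∈ L, ∑ z ∈ L, if f x = f z then u x * u z else 0 := by
  have hfiber : ∑ x ∈ L, ∑ z ∈ L, (if f x = f z then u x * u z else 0) =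
      ∑ c ∈ L.image f, (∑ x ∈ L with f x = c, u x) ^ 2 := by
    rw [← sum_fiberwise_of_maps_to fun x hx => mem_image_of_mem f hx]
    refine sum_congr rfl fun c _ => ?_
    rw [sq, sum_mul_sum]
    refine sum_congr rfl fun x hx => ?_
    rw [← sum_filter, (mem_filter.1 hx).2]
    simp only [eq_comm]
  rw [hfiber, ← sum_fiberwise_of_maps_to fun x hx => mem_image_of_mem f hx]
  exact sq_sum_le_card_mul_sum_sq.trans (by gcongr)

theorem mul_sum_sum_ite_ne_le (hp : #(L.image f) ≤ p) (u : κ → ℝ) :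
    (p : ℝ) * ∑ x ∈ L, ∑ z ∈ L, (if f x ≠ f z then u x * u z else 0) ≤
      (p - 1) * (∑ x ∈ L, u x) ^ 2 := by
  have hsplit : (∑ x ∈ L, u x) ^ 2 =
      ∑ x ∈ L, ∑ z ∈ L, (if f x = f z then u x * u z else 0) +
        ∑ x ∈ L, ∑ z ∈ L, (if f x ≠ f z then u x * u z else 0) := by
    simp only [sq, sum_mul_sum, ← sum_add_distrib, ite_not]
    refine sum_congr rfl fun x _ => sum_congr rfl fun z _ => ?_
    split_ifs
    · rw [add_zero]
    · rw [zero_add]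
  linear_combination sq_sum_le_mul_sum_sum_ite hp u - (p : ℝ) * hsplit

variable [Fintype κ] [DecidableEq κ] {H : Matrix (Option κ) (Option κ) ℝ}

theorem isLorentzianAt_single_none (hH : H.IsSymm)
    (h : ∀ u : κ → ℝ, H none none * ∑ x, ∑ z, u x * u z * H (some x) (some z) ≤
      (∑ x, u x * H (some x) none) ^ 2) :
    IsLorentzianAt H (Pi.single none 1) := by
  intro w
  have hcross (x : κ) : H none (some x) = H (some x) none := hH.apply _ _
  have hw : w ⬝ᵥ H *ᵥ w = w none ^ 2 * H none none +
      2 * w none * ∑ x, w (some x) * H (some x) none +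
      ∑ x, ∑ z, w (some x) * w (some z) * H (some x) (some z) := by
    simp only [dotProduct, mulVec, Fintype.sum_option, hcross, mul_add, sum_add_distrib, mul_sum]
    simp only [sq, two_mul, add_mul, sum_add_distrib, mul_comm, mul_left_comm, add_assoc]
  rw [hw, mulVec_single_one, single_one_dotProduct, dotProduct, Fintype.sum_option]
  simp only [col_apply]
  linarith [h fun x => w (some x)]

theorem isLorentzianAt_single_none_of_multipartite {c : ℝ} (hH : H.IsSymm)
    (hp : #(L.image f) ≤ p + 2) (hnone : H none none = (p + 2) * (p + 1) * c)
    (hcross : ∀ x, H (some x) none = if x ∈ L then (p + 1) * c else 0)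
    (hsome : ∀ x z, H (some x) (some z) = if x ∈ L ∧ z ∈ L ∧ f x ≠ f z then c else 0) :
    IsLorentzianAt H (Pi.single none 1) := by
  refine isLorentzianAt_single_none hH fun u => ?_
  have hsum : ∑ x, u x * H (some x) none = (p + 1) * c * ∑ x ∈ L, u x := by
    simp only [hcross, mul_ite, mul_zero, sum_ite_mem, univ_inter, ← sum_mul, mul_comm]
  have hsum₂ : ∑ x, ∑ z, u x * u z * H (some x) (some z) =
      c * ∑ x ∈ L, ∑ z ∈ L, if f x ≠ f z then u x * u z else 0 := by
    simp only [hsome, ite_and, mul_ite, mul_zero, sum_ite_mem, univ_inter, mul_comm c,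
      sum_ite_irrel, sum_const_zero, sum_mul, ite_mul, zero_mul]
  have h := mul_le_mul_of_nonneg_left (mul_sum_sum_ite_ne_le hp u)
    (mul_nonneg (Nat.cast_add_one_pos p : (0 : ℝ) < p + 1).le (sq_nonneg c))
  rw [hnone, hsum, hsum₂]
  push_cast at h
  linarith

end Multipartite

section IndepMultiset

variable {α : Type*} {M : Matroid α} {u w : Multiset α} {x z : α}

/-- A multiset is independent if it is squarefree and its support is independent. Thus the monomials
of the independence polynomial are those whose exponent is an independent multiset. -/
def IndepMultiset (M : Matroid α) (u : Multiset α) : Prop :=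
  u.Nodup ∧ M.Indep {x | x ∈ u}

theorem indepMultiset_val {A : Finset α} : IndepMultiset M A.val ↔ M.Indep ↑A :=
  and_iff_right A.nodup

theorem IndepMultiset.mono (hu : IndepMultiset M u) (h : w ≤ u) : IndepMultiset M w :=
  ⟨Multiset.nodup_of_le h hu.1, hu.2.subset fun _ hx => Multiset.mem_of_le h hx⟩

theorem IndepMultiset.add_iff (hu : IndepMultiset M u) :
    IndepMultiset M (w + u) ↔ IndepMultiset (M ／ {x | x ∈ u}) w := by
  have hset : {x | x ∈ w + u} = {x | x ∈ w} ∪ {x | x ∈ u} :=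
    Set.ext fun _ => Multiset.mem_add
  have hdisj : Disjoint w u ↔ Disjoint {x | x ∈ w} {x | x ∈ u} := by
    rw [Multiset.disjoint_left, Set.disjoint_left]
    rfl
  simp only [IndepMultiset, Multiset.nodup_add, hu.1, hu.2.contract_indep_iff, hset, hdisj]
  tauto

theorem indepMultiset_singleton : IndepMultiset M {x} ↔ M.IsNonloop x := by
  simp [IndepMultiset]

theorem indepMultiset_pair : IndepMultiset M {x, z} ↔
    M.IsNonloop x ∧ M.IsNonloop z ∧ M.closure {x} ≠ M.closure {z} := by
  have hset : {y | y ∈ ({x, z} : Multiset α)} = {x, z} := by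
    ext
    simp
  rw [IndepMultiset, hset]
  constructor
  · rintro ⟨hne, h⟩
    have hx := h.isNonloop_of_mem (Set.mem_insert x {z})
    have hz := h.isNonloop_of_mem (Set.mem_insert_of_mem x rfl)
    refine ⟨hx, hz, ?_⟩
    rw [ne_eq, hx.closure_eq_closure_iff_eq_or_dep hz]
    simpa [h] using hne
  · rintro ⟨hx, hz, h⟩
    rw [ne_eq, hx.closure_eq_closure_iff_eq_or_dep hz] at h
    simpa [not_or] using h

theorem card_add_card_nonloops_contract_le [Fintype α] (M : Matroid α)
    [DecidablePred (M ／ {x | x ∈ u}).IsNonloop] (hu : u.Nodup) :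
    u.card + #{x | (M ／ {x | x ∈ u}).IsNonloop x} ≤ Fintype.card α := by
  classical
  rw [← Multiset.toFinset_card_of_nodup hu, ← card_union_of_disjoint]
  · exact card_le_univ _
  · rw [disjoint_left]
    intro x hx hx'
    exact (mem_filter.1 hx').2.mem_ground.2 (Multiset.mem_toFinset.1 hx)

end IndepMultiset

section Exponents

variable {α : Type*} {u w : Multiset α} {b c : ℕ}

/-- The exponent of the monomial `x ^ u * y ^ b`, where `none` indexes the homogenizing variable `y`
and `some i` indexes `x i`. -/
def homogExponent (u : Multiset α) (b : ℕ) : Multiset (Option α) :=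
  u.map some + Multiset.replicate b none

theorem none_cons_homogExponent (u : Multiset α) (b : ℕ) :
    none ::ₘ homogExponent u b = homogExponent u (b + 1) := by
  rw [homogExponent, homogExponent, Multiset.replicate_succ, Multiset.add_cons]

theorem some_cons_homogExponent (x : α) (u : Multiset α) (b : ℕ) :
    some x ::ₘ homogExponent u b = homogExponent (x ::ₘ u) b := by
  rw [homogExponent, homogExponent, Multiset.map_cons, Multiset.cons_add]

theorem exists_homogExponent_eq (m : Multiset (Option α)) : ∃ u b, homogExponent u b = m := by
  induction m using Multiset.induction with
  | empty => exact ⟨0, 0, rfl⟩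
  | cons i m ih =>
    obtain ⟨u, b, rfl⟩ := ih
    cases i with
    | none => exact ⟨u, b + 1, (none_cons_homogExponent u b).symm⟩
    | some x => exact ⟨x ::ₘ u, b, (some_cons_homogExponent x u b).symm⟩

theorem card_homogExponent (u : Multiset α) (b : ℕ) : (homogExponent u b).card = u.card + b := by
  rw [homogExponent, Multiset.card_add, Multiset.card_map, Multiset.card_replicate]

section

variable [DecidableEq α]

theorem count_none_homogExponent (u : Multiset α) (b : ℕ) : (homogExponent u b).count none = b := by
  simp [homogExponent]

theorem count_some_homogExponent (u : Multiset α) (b : ℕ) (x : α) :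
    (homogExponent u b).count (some x) = u.count x := by
  simp [homogExponent, Multiset.count_map_eq_count' _ _ (Option.some_injective α),
    Multiset.count_replicate]

end

theorem homogExponent_inj : homogExponent u b = homogExponent w c ↔ u = w ∧ b = c := by
  classical
  refine ⟨fun h => ⟨Multiset.ext' fun x => ?_, ?_⟩, by rintro ⟨rfl, rfl⟩; rfl⟩
  · simpa only [count_some_homogExponent] using congrArg (Multiset.count (some x)) h
  · simpa only [count_none_homogExponent] using congrArg (Multiset.count none) h

end Exponents

section IndepPolynomial

variable {α : Type*} [Fintype α] [DecidableEq α] {M : Matroid α} {u : Multiset α} {b : ℕ}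

open scoped Classical in
/-- The exponents of the homogenized independence polynomial `∑ A, x ^ A * y ^ (|α| - |A|)`, the sum
being over the independent sets `A` of `M`. -/
noncomputable def indepExponents (M : Matroid α) : Finset (Multiset (Option α)) :=
  ({A | M.Indep ↑A} : Finset (Finset α)).image fun A =>
    homogExponent A.val (Fintype.card α - #A)

theorem homogExponent_mem_indepExponents :
    homogExponent u b ∈ indepExponents M ↔ u.card + b = Fintype.card α ∧ IndepMultiset M u := by
  simp only [indepExponents, mem_image, mem_filter_univ, homogExponent_inj]
  constructor
  · rintro ⟨A, hA, rfl, rfl⟩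
    exact ⟨Nat.add_sub_of_le (card_le_univ A), indepMultiset_val.2 hA⟩
  · rintro ⟨hcard, hu⟩
    exact ⟨⟨u, hu.1⟩, hu.2, rfl, Nat.sub_eq_of_eq_add' hcard.symm⟩

theorem card_of_mem_indepExponents {e : Multiset (Option α)} (he : e ∈ indepExponents M) :
    e.card = Fintype.card α := by
  obtain ⟨u, b, rfl⟩ := exists_homogExponent_eq e
  rw [card_homogExponent, (homogExponent_mem_indepExponents.1 he).1]

theorem indepMultiset_of_homogExponent_le {e : Multiset (Option α)} (he : e ∈ indepExponents M)
    (h : homogExponent u b ≤ e) : IndepMultiset M u := by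
  obtain ⟨w, c, rfl⟩ := exists_homogExponent_eq e
  refine (homogExponent_mem_indepExponents.1 he).2.mono (Multiset.le_iff_count.2 fun x => ?_)
  simpa only [count_some_homogExponent] using Multiset.count_le_of_le (some x) h

theorem none_cons_erase_mem_indepExponents {e : Multiset (Option α)} (he : e ∈ indepExponents M)
    {i : Option α} (hi : i ∈ e) : none ::ₘ e.erase i ∈ indepExponents M := by
  obtain ⟨m, rfl⟩ := Multiset.exists_cons_of_mem hi
  rw [Multiset.erase_cons_head]
  cases i with
  | none => exact he
  | some x =>
    obtain ⟨u, b, rfl⟩ := exists_homogExponent_eq m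
    rw [some_cons_homogExponent, homogExponent_mem_indepExponents, Multiset.card_cons] at he
    rw [none_cons_homogExponent, homogExponent_mem_indepExponents]
    exact ⟨by lia, he.2.mono (Multiset.le_cons_self u x)⟩

open scoped Classical in
theorem jet_homogExponent {v : Option α → ℝ} (hv : ∀ i, v i ≠ 0)
    (h : u.card + b = Fintype.card α) :
    jet (indepExponents M) v (homogExponent u b) = if IndepMultiset M u then (b ! : ℝ) else 0 := by
  rw [jet_eq_ite (fun e => card_of_mem_indepExponents) hv (by rw [card_homogExponent, h])]
  simp only [homogExponent_mem_indepExponents, h, true_and]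
  split_ifs with hu
  · have hsome (x : α) : ((u.count x)! : ℝ) = 1 := by
      rw [Nat.factorial_eq_one.2 (Multiset.nodup_iff_count_le_one.1 hu.1 x), Nat.cast_one]
    simp only [Fintype.prod_option, count_none_homogExponent, count_some_homogExponent, hsome,
      prod_const_one, mul_one]
  · rfl

theorem hessian_jet_homogExponent_isLorentzianAt_single_none {v : Option α → ℝ}
    (hv : ∀ i, v i ≠ 0) (hu : IndepMultiset M u) (hcard : u.card + (b + 2) = Fintype.card α) :
    IsLorentzianAt (hessian (jet (indepExponents M) v) (homogExponent u b)) (Pi.single none 1) := by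
  classical
  refine isLorentzianAt_single_none_of_multipartite (c := b !) (p := b)
    (L := {x | (M ／ {x | x ∈ u}).IsNonloop x}) (f := fun x => (M ／ {x | x ∈ u}).closure {x})
    (hessian_isSymm _ _) ?_ ?_ ?_ ?_
  · have := card_add_card_nonloops_contract_le M hu.1
    exact card_image_le.trans (by lia)
  · simp only [hessian, of_apply, none_cons_homogExponent]
    rw [jet_homogExponent hv hcard, if_pos hu, Nat.factorial_succ, Nat.factorial_succ]
    push_cast
    ring
  · intro x
    simp only [hessian, of_apply, none_cons_homogExponent, some_cons_homogExponent]
    rw [jet_homogExponent hv (by rw [Multiset.card_cons]; lia), ← Multiset.singleton_add,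
      hu.add_iff, indepMultiset_singleton, Nat.factorial_succ]
    push_cast
    simp only [mem_filter_univ]
  · intro x z
    simp only [hessian, of_apply, some_cons_homogExponent]
    rw [jet_homogExponent hv (by simp only [Multiset.card_cons]; lia), ← Multiset.singleton_add,
      ← Multiset.singleton_add, ← add_assoc, hu.add_iff, Multiset.singleton_add,
      ← Multiset.insert_eq_cons, indepMultiset_pair]
    simp only [mem_filter_univ]
    congr

theorem hessian_jet_indepExponents_isLorentzianAt_of_card {v : Option α → ℝ} (hv : ∀ i, 0 < v i)
    {m : Multiset (Option α)} (hm : m.card + 2 = Fintype.card α) :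
    IsLorentzianAt (hessian (jet (indepExponents M) v) m) v := by
  obtain ⟨u, b, rfl⟩ := exists_homogExponent_eq m
  have hv0 (i) : v i ≠ 0 := (hv i).ne'
  rw [card_homogExponent, add_assoc] at hm
  by_cases hu : IndepMultiset M u
  · refine IsLorentzianAt.of_pos (hessian_isSymm _ _)
      (hessian_jet_homogExponent_isLorentzianAt_single_none hv0 hu hm) ?_ ?_
    · rw [mulVec_single_one, single_one_dotProduct, col_apply, hessian, of_apply,
        none_cons_homogExponent, none_cons_homogExponent, jet_homogExponent hv0 hm, if_pos hu]
      exact mod_cast Nat.factorial_pos _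
    · have hv_nonneg (i) : 0 ≤ v i := (hv i).le
      exact sum_nonneg fun i _ => mul_nonneg (hv_nonneg i) <| sum_nonneg fun j _ =>
        mul_nonneg (jet_nonneg hv_nonneg _) (hv_nonneg j)
  · have hzero : hessian (jet (indepExponents M) v) (homogExponent u b) = 0 := by
      ext i j
      refine (jet_eq_zero_iff hv).2 fun e he hle => ?_
      exact hu (indepMultiset_of_homogExponent_le he
        (((Multiset.le_cons_self _ j).trans (Multiset.le_cons_self _ i)).trans hle))
    intro w
    simp only [hzero, zero_mulVec, dotProduct_zero, mul_zero]
    positivity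

theorem hessian_jet_indepExponents_isLorentzianAt {v : Option α → ℝ} (hv : ∀ i, 0 < v i)
    {m : Multiset (Option α)} (hm : m.card + 2 ≤ Fintype.card α) :
    IsLorentzianAt (hessian (jet (indepExponents M) v) m) v :=
  (jet_isHomogeneousJet (fun _ => card_of_mem_indepExponents) v).isLorentzianAt_hessian
    (jet_nonneg fun i => (hv i).le) hv (i₀ := none)
    (fun _ _ h j => jet_cons_cons_eq_zero_of_replace hv
      (fun _ he _ => none_cons_erase_mem_indepExponents he) h j)
    (fun _ => hessian_jet_indepExponents_isLorentzianAt_of_card hv) hm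

open scoped Classical in
/-- The value at `t` of the `a`-th derivative of the polynomial `∑ A, y ^ (|α| - |A|)`, the sum
being over the independent sets `A` of `M`. -/
noncomputable def indepPolyDeriv {α : Type*} [Fintype α] (M : Matroid α) (a : ℕ) (t : ℝ) : ℝ :=
  ∑ A ∈ ({A | M.Indep ↑A} : Finset (Finset α)),
    ((Fintype.card α - #A).descFactorial a : ℝ) * t ^ (Fintype.card α - #A - a)

theorem jet_indepExponents_replicate_none (t : ℝ) (a : ℕ) :
    jet (indepExponents M) (fun i => i.elim t fun _ => 1) (.replicate a none) =
      indepPolyDeriv M a t := by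
  rw [jet, indepExponents, indepPolyDeriv,
    sum_image fun A _ B _ h => Finset.val_injective (homogExponent_inj.1 h).1]
  refine sum_congr rfl fun A _ => ?_
  simp [monomialDeriv, Fintype.prod_option, count_none_homogExponent, Multiset.count_replicate]

end IndepPolynomial

section IndepCount

variable {α : Type*} {M : Matroid α} {a d k : ℕ}

/-- The number of independent `k`-element sets of a matroid. -/
noncomputable def indepCount (M : Matroid α) (k : ℕ) : ℕ :=
  Nat.card {A : Finset α // #A = k ∧ M.Indep ↑A}

theorem indepCount_restrictSubtype_ground (M : Matroid α) (k : ℕ) :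
    indepCount (M.restrictSubtype M.E) k = indepCount M k := by
  classical
  have hindep (A : Finset M.E) :
      (M.restrictSubtype M.E).Indep ↑A ↔ M.Indep ↑(A.map (.subtype (· ∈ M.E))) := by
    rw [Matroid.restrictSubtype_indep_iff, coe_map, Function.Embedding.coe_subtype]
  refine Nat.card_eq_of_bijective
    (fun A => ⟨A.1.map (.subtype (· ∈ M.E)), by rw [card_map, A.2.1], (hindep A).1 A.2.2⟩)
    ⟨fun A B h => Subtype.ext (map_injective _ (congrArg Subtype.val h)), fun ⟨A, hA, hI⟩ => ?_⟩
  have hmap : (A.subtype (· ∈ M.E)).map (.subtype (· ∈ M.E)) = A :=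
    subtype_map_of_mem fun x hx => hI.subset_ground hx
  refine ⟨⟨A.subtype (· ∈ M.E), ?_, (hindep _).2 (by rwa [hmap])⟩, Subtype.ext hmap⟩
  rw [← hA, ← card_map, hmap]

variable [Fintype α]

theorem continuous_indepPolyDeriv (M : Matroid α) (a : ℕ) : Continuous (indepPolyDeriv M a) := by
  unfold indepPolyDeriv
  fun_prop

theorem indepPolyDeriv_zero (h : a + k = Fintype.card α) :
    indepPolyDeriv M a 0 = a ! * indepCount M k := by
  classical
  have hterm (A : Finset α) : ((Fintype.card α - #A).descFactorial a : ℝ) *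
      0 ^ (Fintype.card α - #A - a) = if #A = k then (a ! : ℝ) else 0 := by
    have hA := card_le_univ A
    split_ifs with hk
    · rw [show Fintype.card α - #A = a by lia, Nat.descFactorial_self, Nat.sub_self, pow_zero,
        mul_one]
    · rcases lt_or_ge (Fintype.card α - #A) a with hlt | hle
      · rw [Nat.descFactorial_of_lt hlt, Nat.cast_zero, zero_mul]
      · rw [zero_pow (by lia), mul_zero]
  rw [indepPolyDeriv, sum_congr rfl fun A _ => hterm A, ← sum_filter, filter_filter, sum_const,
    nsmul_eq_mul, mul_comm, indepCount, Nat.card_eq_fintype_card, Fintype.card_subtype]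
  simp only [and_comm]

theorem indepPolyDeriv_mul_le_sq (h : a + (d + 2) = Fintype.card α) {t : ℝ} (ht : 0 < t) :
    (d + 2) * (indepPolyDeriv M (a + 2) t * indepPolyDeriv M a t) ≤
      (d + 1) * indepPolyDeriv M (a + 1) t ^ 2 := by
  classical
  have hv (i : Option α) : 0 < i.elim t fun _ => 1 := by
    cases i with
    | none => exact ht
    | some => exact one_pos
  have hcard : (Multiset.replicate a (none : Option α)).card + (d + 2) = Fintype.card α := by
    rw [Multiset.card_replicate, h]
  have hL := hessian_jet_indepExponents_isLorentzianAt (M := M) hv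
    (m := .replicate a none) (by lia)
  have hle := (jet_isHomogeneousJet (fun _ => card_of_mem_indepExponents) _).mul_le_sq hcard hL none
  simpa only [← Multiset.replicate_succ, jet_indepExponents_replicate_none] using hle

theorem factorial_mul_indepCount_mul_le_sq (M : Matroid α) (h : a + (d + 2) = Fintype.card α) :
    ((d : ℝ) + 2) * (((a + 2)! * indepCount M d) * (a ! * indepCount M (d + 2))) ≤
      (d + 1) * ((a + 1)! * indepCount M (d + 1)) ^ 2 := by
  have hcont := continuous_indepPolyDeriv M
  have hlim := ContinuousWithinAt.closure_le (s := Set.Ioi (0 : ℝ)) (x := 0)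
    (by simp only [closure_Ioi, Set.self_mem_Ici]) (by fun_prop) (by fun_prop)
    fun t ht => indepPolyDeriv_mul_le_sq (M := M) h ht
  rwa [indepPolyDeriv_zero (k := d + 2) h, indepPolyDeriv_zero (k := d) (by lia),
    indepPolyDeriv_zero (k := d + 1) (by lia)] at hlim

theorem div_add_choose_eq (x : ℝ) :
    x / ((a + k).choose k : ℝ) = k ! * (a ! * x) / (a + k)! := by
  rw [← Nat.choose_symm_add, Nat.cast_add_choose]
  field_simp

theorem indepCount_div_choose_mul_le_sq (M : Matroid α) (d : ℕ) :
    (indepCount M (d + 2) : ℝ) / (Fintype.card α).choose (d + 2) *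
        (indepCount M d / (Fintype.card α).choose d) ≤
      (indepCount M (d + 1) / (Fintype.card α).choose (d + 1)) ^ 2 := by
  rcases lt_or_ge (Fintype.card α) (d + 2) with hn | hn
  · rw [Nat.choose_eq_zero_of_lt hn, Nat.cast_zero, div_zero, zero_mul]
    positivity
  obtain ⟨a, ha⟩ := Nat.exists_eq_add_of_le' hn
  have hle := factorial_mul_indepCount_mul_le_sq M ha.symm
  have h₀ := div_add_choose_eq (a := a + 2) (k := d) (indepCount M d)
  have h₁ := div_add_choose_eq (a := a + 1) (k := d + 1) (indepCount M (d + 1))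
  have h₂ := div_add_choose_eq (a := a) (k := d + 2) (indepCount M (d + 2))
  rw [show a + 2 + d = a + (d + 2) by lia] at h₀
  rw [show a + 1 + (d + 1) = a + (d + 2) by lia] at h₁
  rw [ha, h₀, h₁, h₂, div_mul_div_comm, div_pow, ← sq]
  gcongr
  have hmul := mul_le_mul_of_nonneg_left hle (by positivity : (0 : ℝ) ≤ (d + 1)! * d !)
  have hd : ((d + 2)! : ℝ) = (d + 2) * (d + 1)! := mod_cast Nat.factorial_succ (d + 1)
  have hd' : ((d + 1)! : ℝ) = (d + 1) * d ! := mod_cast Nat.factorial_succ d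
  rw [hd]
  linear_combination hmul - (d + 1)! * ((a + 1)! * indepCount M (d + 1) : ℝ) ^ 2 * hd'

end IndepCount

theorem stmt17_general {α : Type*} (M : Matroid α) [M.Finite] {k : ℕ} (hk : 1 ≤ k) :
    (indepCount M (k + 1) : ℝ) / M.E.ncard.choose (k + 1) *
        (indepCount M (k - 1) / M.E.ncard.choose (k - 1)) ≤
      (indepCount M k / M.E.ncard.choose k) ^ 2 := by
  obtain ⟨d, rfl⟩ := Nat.exists_eq_add_of_le' hk
  have := M.ground_finite.fintype
  have hcard : M.E.ncard = Fintype.card M.E := by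
    rw [← Nat.card_coe_set_eq, Nat.card_eq_fintype_card]
  simp only [hcard, ← indepCount_restrictSubtype_ground M]
  exact indepCount_div_choose_mul_le_sq _ d

theorem stmt17 {n : ℕ} (M : Matroid (Fin n)) (hE : M.E = Set.univ)
    (k : ℕ) (hk : 1 ≤ k) :
    ((numIndep M (k + 1) : ℝ) / (n.choose (k + 1) : ℝ)) *
        ((numIndep M (k - 1) : ℝ) / (n.choose (k - 1) : ℝ)) ≤
      ((numIndep M k : ℝ) / (n.choose k : ℝ)) ^ 2 := by
  simpa only [numIndep, indepCount, hE, Set.ncard_univ, Nat.card_fin] using stmt17_general M hk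
end

section
/- Let f be a c-Rayleigh polynomial in n variables (not necessarily homogeneous) with nonnegative coefficients. Then the support of f is interval convex: if α, β ∈ supp(f) and α ≤ γ ≤ β componentwise, then γ ∈ supp(f). -/
open MvPolynomial

/-- The iterated partial derivative `∂^α f`. -/
noncomputable def pdMulti {n : ℕ} (α : Fin n →₀ ℕ) (f : MvPolynomial (Fin n) ℝ) :
    MvPolynomial (Fin n) ℝ :=
  (List.finRange n).foldr (fun i g => (fun h => pderiv i h)^[α i] g) f

/-- `f` is `c`-Rayleigh. -/
def IsCRayleigh {n : ℕ} (c : ℝ) (f : MvPolynomial (Fin n) ℝ) : Prop :=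
  (∀ α : Fin n →₀ ℕ, 0 ≤ f.coeff α) ∧
    ∀ (i j : Fin n) (α : Fin n →₀ ℕ) (w : Fin n → ℝ), (∀ k, 0 ≤ w k) →
      eval w (pdMulti α f) *
          eval w (pdMulti (α + Finsupp.single i 1 + Finsupp.single j 1) f) ≤
        c * (eval w (pdMulti (α + Finsupp.single i 1) f) *
          eval w (pdMulti (α + Finsupp.single j 1) f))

/-!
Suppose `α` lies in the support of `f` but `α + eᵢ` does not, and put `g = ∂^α f` and `h = ∂ᵢ g`.
Then `g(0) > 0` and `h(0) = 0`, and the Rayleigh inequalities say `g ∂ⱼh ≤ c h ∂ⱼg` for every `j`.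
Let `p` and `q` be the restrictions of `g` and `h` to the diagonal. Summing over `j` gives
`p q' ≤ c q p'` on the positive axis, so that near `0` the logarithmic derivative of `q` is
bounded above, which a nonzero `q ≥ 0` with `q(0) = 0` does not allow. Hence `q = 0`, and `h = 0`
since its coefficients are nonnegative: nothing in the support of `f` lies above `α + eᵢ`.
Thus, below any `β` in the support, unit steps upwards from `α` never leave the support.
-/

open Filter
open scoped Nat Polynomial Topology

section PolynomialNearZero

theorem derivative_X_pow_succ_mul {R : Type*} [CommSemiring R] (k : ℕ) (r : R[X]) :
    (Polynomial.X ^ (k + 1) * r).derivative =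
      Polynomial.X ^ k * ((k + 1 : R[X]) * r + Polynomial.X * r.derivative) := by
  rw [Polynomial.derivative_mul, Polynomial.derivative_X_pow, Nat.add_sub_cancel,
    Polynomial.C_eq_natCast]
  push_cast
  ring

theorem exists_eq_X_pow_succ_mul_of_eval_zero_eq_zero {R : Type*} [CommRing R] {q : R[X]}
    (hq : q ≠ 0) (hq₀ : q.eval 0 = 0) :
    ∃ (k : ℕ) (r : R[X]), r.eval 0 ≠ 0 ∧ q = Polynomial.X ^ (k + 1) * r := by
  obtain ⟨r, hqr, hr⟩ := q.exists_eq_pow_rootMultiplicity_mul_and_not_dvd hq 0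
  obtain ⟨k, hk⟩ := Nat.exists_eq_succ_of_ne_zero
    ((Polynomial.rootMultiplicity_pos hq).2 hq₀).ne'
  refine ⟨k, r, mt Polynomial.dvd_iff_isRoot.2 hr, ?_⟩
  rwa [hk, Polynomial.C_0, sub_zero] at hqr

/- If `q = X ^ (k + 1) * r` with `r(0) ≠ 0`, dividing the inequality by `t ^ k` and letting `t → 0`
gives `p(0) (k + 1) r(0) ≤ 0`, whereas `r(0) > 0` because `q` is nonnegative to the right of `0`. -/
theorem eq_zero_of_eventually_mul_derivative_le {K : Type*} [Field K] [LinearOrder K]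
    [IsStrictOrderedRing K] [TopologicalSpace K] [OrderTopology K] {p q s : K[X]}
    (hp : 0 < p.eval 0) (hq₀ : q.eval 0 = 0) (hq : ∀ᶠ t in 𝓝[>] 0, 0 ≤ q.eval t)
    (hle : ∀ᶠ t in 𝓝[>] 0, p.eval t * q.derivative.eval t ≤ q.eval t * s.eval t) :
    q = 0 := by
  by_contra hne
  obtain ⟨k, r, hr, rfl⟩ := exists_eq_X_pow_succ_mul_of_eval_zero_eq_zero hne hq₀
  have tendsto_eval (u : K[X]) : Tendsto (fun t ↦ u.eval t) (𝓝[>] 0) (𝓝 (u.eval 0)) :=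
    u.continuous.continuousAt.mono_left nhdsWithin_le_nhds
  have hr_nonneg : 0 ≤ r.eval 0 := by
    refine ge_of_tendsto (tendsto_eval r) ?_
    filter_upwards [hq, self_mem_nhdsWithin] with t hqt (ht : 0 < t)
    rw [Polynomial.eval_mul, Polynomial.eval_pow, Polynomial.eval_X] at hqt
    exact nonneg_of_mul_nonneg_right hqt (pow_pos ht _)
  have hlimit : (p * ((k + 1 : K[X]) * r + Polynomial.X * r.derivative)).eval 0 ≤
      (Polynomial.X * r * s).eval 0 := by
    refine le_of_tendsto_of_tendsto (tendsto_eval _) (tendsto_eval _) ?_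
    filter_upwards [hle, self_mem_nhdsWithin] with t hlet (ht : 0 < t)
    refine le_of_mul_le_mul_left ?_ (pow_pos ht k)
    rw [derivative_X_pow_succ_mul] at hlet
    simp only [Polynomial.eval_mul, Polynomial.eval_pow, Polynomial.eval_X] at hlet ⊢
    rw [mul_left_comm]
    exact hlet.trans_eq (by ring)
  have hpos : 0 < p.eval 0 * ((k + 1) * r.eval 0) :=
    mul_pos hp (mul_pos k.cast_add_one_pos (hr_nonneg.lt_of_ne' hr))
  refine hpos.not_ge ?_
  simpa using hlimit

end PolynomialNearZero

section Diagonal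

variable {σ R : Type*} [CommSemiring R]

/-- The restriction `p(X, …, X)` of a multivariate polynomial to the diagonal. For coefficientwise
nonnegative `p` no information on vanishing is lost, which reduces questions to one variable. -/
noncomputable def diagonal : MvPolynomial σ R →ₐ[R] R[X] :=
  aeval fun _ ↦ Polynomial.X

theorem diagonal_X (i : σ) : diagonal (X i : MvPolynomial σ R) = Polynomial.X :=
  aeval_X _ i

theorem eval_diagonal (t : R) (p : MvPolynomial σ R) :
    (diagonal p).eval t = eval (fun _ ↦ t) p := by
  induction p using MvPolynomial.induction_on with
  | C a => simp [diagonal]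
  | add p q hp hq => simp [hp, hq]
  | mul_X p i hp => simp [hp, diagonal_X]

theorem eval_zero_diagonal (p : MvPolynomial σ R) : (diagonal p).eval 0 = p.coeff 0 := by
  rw [eval_diagonal]
  exact DFunLike.congr_fun eval_zero p

theorem derivative_diagonal [Fintype σ] (p : MvPolynomial σ R) :
    (diagonal p).derivative = ∑ j, diagonal (pderiv j p) := by
  classical
  induction p using MvPolynomial.induction_on with
  | C a => simp [diagonal]
  | add p q hp hq => simp [hp, hq, Finset.sum_add_distrib]
  | mul_X p i hp =>
    simp [hp, diagonal_X, pderiv_X, Pi.single_apply, apply_ite, Finset.sum_add_distrib,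
      Finset.mul_sum, mul_comm]

variable [PartialOrder R] [IsOrderedRing R] {p : MvPolynomial σ R}

theorem eval_nonneg_of_coeff_nonneg (hp : ∀ m, 0 ≤ p.coeff m) {w : σ → R} (hw : ∀ k, 0 ≤ w k) :
    0 ≤ eval w p := by
  rw [eval_eq]
  exact Finset.sum_nonneg fun m _ ↦
    mul_nonneg (hp m) (Finset.prod_nonneg fun k _ ↦ pow_nonneg (hw k) _)

theorem eq_zero_of_diagonal_eq_zero (hp : ∀ m, 0 ≤ p.coeff m) (h : diagonal p = 0) : p = 0 := by
  have hsum : ∑ m ∈ p.support, p.coeff m = 0 := by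
    simpa [eval_diagonal, eval_eq] using congrArg (Polynomial.eval 1) h
  rw [Finset.sum_eq_zero_iff_of_nonneg fun m _ ↦ hp m] at hsum
  rw [← support_eq_empty, Finset.eq_empty_iff_forall_notMem]
  exact fun m hm ↦ mem_support_iff.1 hm (hsum m hm)

end Diagonal

theorem eq_zero_of_mul_pderiv_le {σ K : Type*} [Finite σ] [Field K] [LinearOrder K]
    [IsStrictOrderedRing K] [TopologicalSpace K] [OrderTopology K] {c : K}
    {g h : MvPolynomial σ K} (hg : 0 < g.coeff 0) (hh : ∀ m, 0 ≤ h.coeff m) (hh₀ : h.coeff 0 = 0)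
    (hle : ∀ j t, 0 < t → eval (fun _ ↦ t) g * eval (fun _ ↦ t) (pderiv j h) ≤
      c * (eval (fun _ ↦ t) h * eval (fun _ ↦ t) (pderiv j g))) :
    h = 0 := by
  cases nonempty_fintype σ
  refine eq_zero_of_diagonal_eq_zero hh ?_
  refine eq_zero_of_eventually_mul_derivative_le (p := diagonal g)
    (s := Polynomial.C c * (diagonal g).derivative) ?_ ?_ ?_ ?_
  · rwa [eval_zero_diagonal]
  · rwa [eval_zero_diagonal]
  · filter_upwards [self_mem_nhdsWithin] with t (ht : 0 < t)
    rw [eval_diagonal]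
    exact eval_nonneg_of_coeff_nonneg hh fun _ ↦ ht.le
  · filter_upwards [self_mem_nhdsWithin] with t (ht : 0 < t)
    simp only [derivative_diagonal, Polynomial.eval_mul, Polynomial.eval_C,
      Polynomial.eval_finsetSum, eval_diagonal, Finset.mul_sum]
    exact Finset.sum_le_sum fun j _ ↦ (hle j t ht).trans_eq (mul_left_comm _ _ _)

section ExpCoeff

variable {σ : Type*}

theorem prod_factorial_add_single (m : σ →₀ ℕ) (i : σ) :
    ((m + Finsupp.single i 1).prod fun _ k ↦ k !) = (m i + 1) * m.prod fun _ k ↦ k ! := by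
  rw [← Finsupp.mul_prod_erase' _ i _ fun _ ↦ Nat.factorial_zero,
    ← Finsupp.mul_prod_erase' m i _ fun _ ↦ Nat.factorial_zero, Finsupp.erase_add,
    Finsupp.erase_single, add_zero, Finsupp.add_apply, Finsupp.single_eq_same, Nat.factorial_succ,
    mul_assoc]

theorem prod_factorial_ne_zero (m : σ →₀ ℕ) : (m.prod fun _ k ↦ k !) ≠ 0 :=
  Finset.prod_ne_zero_iff.2 fun i _ ↦ (m i).factorial_ne_zero

variable {R : Type*} [CommSemiring R]

/-- The coefficient of `f` at `w ^ m / m!`, where `m!` is the product of the factorials of the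
entries of `m`; equivalently `∂^m f(0)`. In these coordinates partial derivatives are shifts. -/
noncomputable def expCoeff (m : σ →₀ ℕ) (f : MvPolynomial σ R) : R :=
  (m.prod fun _ k ↦ k !) • f.coeff m

theorem expCoeff_pderiv (m : σ →₀ ℕ) (i : σ) (f : MvPolynomial σ R) :
    expCoeff m (pderiv i f) = expCoeff (m + Finsupp.single i 1) f := by
  simp only [expCoeff, coeff_pderiv, prod_factorial_add_single, nsmul_eq_mul]
  push_cast
  ring

theorem expCoeff_iterate_pderiv (m : σ →₀ ℕ) (i : σ) (k : ℕ) (f : MvPolynomial σ R) :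
    expCoeff m ((fun h ↦ pderiv i h)^[k] f) = expCoeff (m + Finsupp.single i k) f := by
  induction k generalizing f with
  | zero => simp
  | succ k ih =>
    rw [Function.iterate_succ_apply, ih, expCoeff_pderiv, add_assoc, ← Finsupp.single_add]

theorem expCoeff_ext [IsAddTorsionFree R] {f g : MvPolynomial σ R}
    (h : ∀ m, expCoeff m f = expCoeff m g) : f = g := by
  ext m
  exact nsmul_right_injective (prod_factorial_ne_zero m) (h m)

theorem expCoeff_ne_zero_iff [IsAddTorsionFree R] {m : σ →₀ ℕ} {f : MvPolynomial σ R} :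
    expCoeff m f ≠ 0 ↔ m ∈ f.support := by
  rw [expCoeff, mem_support_iff, smul_ne_zero_iff_right (prod_factorial_ne_zero m)]

theorem expCoeff_nonneg_iff [LinearOrder R] [IsOrderedAddMonoid R] {m : σ →₀ ℕ}
    {f : MvPolynomial σ R} : 0 ≤ expCoeff m f ↔ 0 ≤ f.coeff m :=
  nsmul_nonneg_iff (prod_factorial_ne_zero m)

end ExpCoeff

section PdMulti

variable {n : ℕ} (α m : Fin n →₀ ℕ) (f : MvPolynomial (Fin n) ℝ)

theorem expCoeff_pdMulti : expCoeff m (pdMulti α f) = expCoeff (m + α) f := by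
  have hfoldr (l : List (Fin n)) (m : Fin n →₀ ℕ) :
      expCoeff m (l.foldr (fun i g ↦ (fun h ↦ pderiv i h)^[α i] g) f) =
        expCoeff (m + (l.map fun i ↦ Finsupp.single i (α i)).sum) f := by
    induction l generalizing m with
    | nil => simp
    | cons i l ih =>
      rw [List.foldr_cons, expCoeff_iterate_pderiv, ih, List.map_cons, List.sum_cons, add_assoc]
  rw [pdMulti, hfoldr, ← List.ofFn_eq_map, List.sum_ofFn, Finsupp.univ_sum_single]

theorem pdMulti_add_single (i : Fin n) :
    pdMulti (α + Finsupp.single i 1) f = pderiv i (pdMulti α f) :=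
  expCoeff_ext fun m ↦ by
    rw [expCoeff_pderiv, expCoeff_pdMulti, expCoeff_pdMulti, add_right_comm, add_assoc]

variable {α m f}

theorem mem_support_pdMulti : m ∈ (pdMulti α f).support ↔ m + α ∈ f.support := by
  rw [← expCoeff_ne_zero_iff, expCoeff_pdMulti, expCoeff_ne_zero_iff]

theorem coeff_pdMulti_nonneg (hf : ∀ β, 0 ≤ f.coeff β) : 0 ≤ (pdMulti α f).coeff m := by
  rw [← expCoeff_nonneg_iff, expCoeff_pdMulti, expCoeff_nonneg_iff]
  exact hf _

end PdMulti

theorem ordConnected_of_add_single_mem {σ : Type*} {S : Set (σ →₀ ℕ)}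
    (hS : ∀ α ∈ S, ∀ β ∈ S, ∀ i, α + Finsupp.single i 1 ≤ β → α + Finsupp.single i 1 ∈ S) :
    S.OrdConnected := by
  classical
  refine ⟨fun α hα β hβ γ ⟨hαγ, hγβ⟩ ↦ ?_⟩
  obtain ⟨μ, ⟨hμ, hαμ, hμγ⟩, hmax⟩ : ∃ μ, Maximal (· ∈ S ∩ Set.Icc α γ) μ :=
    ((Set.finite_Icc α γ).inter_of_right S).exists_maximal ⟨α, hα, le_rfl, hαγ⟩
  suffices μ = γ from this ▸ hμ
  by_contra hne
  obtain ⟨i, hi⟩ : ∃ i, μ i < γ i := by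
    by_contra! hle
    exact hne (le_antisymm hμγ hle)
  have hstep : μ + Finsupp.single i 1 ≤ γ :=
    (le_tsub_iff_left hμγ).1 (Finsupp.single_le_iff.2 (tsub_pos_of_lt hi))
  have hmem : μ + Finsupp.single i 1 ∈ S := hS μ hμ β hβ i (hstep.trans hγβ)
  have hle := hmax ⟨hmem, hαμ.trans le_self_add, hstep⟩ le_self_add
  simpa using hle i

namespace IsCRayleigh

variable {n : ℕ} {c : ℝ} {f : MvPolynomial (Fin n) ℝ}

theorem add_single_mem_support (hf : IsCRayleigh c f) {α β : Fin n →₀ ℕ} (i : Fin n)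
    (hα : α ∈ f.support) (hβ : β ∈ f.support) (hle : α + Finsupp.single i 1 ≤ β) :
    α + Finsupp.single i 1 ∈ f.support := by
  obtain ⟨hcoeff, hrayleigh⟩ := hf
  by_contra hi
  have hg : 0 < (pdMulti α f).coeff 0 :=
    (coeff_pdMulti_nonneg hcoeff).lt_of_ne'
      (mem_support_iff.1 (mem_support_pdMulti.2 (by rwa [zero_add])))
  have hh₀ : (pdMulti (α + Finsupp.single i 1) f).coeff 0 = 0 := by
    rwa [← notMem_support_iff, mem_support_pdMulti, zero_add]
  have hzero : pdMulti (α + Finsupp.single i 1) f = 0 :=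
    eq_zero_of_mul_pderiv_le hg (fun _ ↦ coeff_pdMulti_nonneg hcoeff) hh₀ fun j t ht ↦ by
      simpa only [pdMulti_add_single] using hrayleigh i j α (fun _ ↦ t) fun _ ↦ ht.le
  have hβ' : β - (α + Finsupp.single i 1) ∈ (pdMulti (α + Finsupp.single i 1) f).support := by
    rwa [mem_support_pdMulti, tsub_add_cancel_of_le hle]
  simp [hzero] at hβ'

theorem ordConnected_support (hf : IsCRayleigh c f) :
    (f.support : Set (Fin n →₀ ℕ)).OrdConnected :=
  ordConnected_of_add_single_mem fun _ hα _ hβ i ↦ hf.add_single_mem_support i hα hβ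

end IsCRayleigh

theorem stmt18 {n : ℕ} (c : ℝ) (hc : 0 < c) (f : MvPolynomial (Fin n) ℝ)
    (hf : IsCRayleigh c f) :
    ∀ α ∈ f.support, ∀ β ∈ f.support, ∀ γ : Fin n →₀ ℕ,
      α ≤ γ → γ ≤ β → γ ∈ f.support :=
  fun _ hα _ hβ _ hαγ hγβ ↦ hf.ordConnected_support.out hα hβ ⟨hαγ, hγβ⟩
end
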